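/- For every natural number n ≥ 2 there exists a constant C > 0 such that for every finite field F, writing q = |F| and G = SL_n(F), there exist elements x₁, x₂ ∈ G with x₁ of order (qⁿ−1)/(q−1) and x₂ of order q^{n−1}−1 such that the number of y ∈ G for which {x₁, y} invariably generates G or {x₂, y} invariably generates G is at least (1 − C/q) · |G|. -/

import Mathlib

/-- `{x, y}` invariably generates `G`: for all `g, h`, the conjugates
`g * x * g⁻¹` and `h * y * h⁻¹` generate `G`. -/
def InvGen {G : Type*} [Group G] (x y : G) : Prop :=
  ∀ g h : G, Subgroup.closure {g * x * g⁻¹, h * y * h⁻¹} = ⊤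

/-!
Let `q = |F|`, let `x₁` generate the intersection of a Singer cycle with `SL_n(F)`, and let `x₂` be
a Singer cycle of `GL_{n-1}(F)`, embedded in `SL_n(F)`. Up to a proportion `O(1/q)` of exceptions,
`y` has nonzero trace and all its eigenspaces are at most one-dimensional. Such a `y` generates the
whole matrix algebra together with any conjugate of `x₁` if it has an eigenvalue, and together with
any conjugate of `x₂` if it has none.

It remains to show that a subgroup `H` containing a conjugate `x` of `x₁` or `x₂` and such a `y` is
all of `SL_n(F)` once `q` is large. Since `x` has order at least `q ^ (n - 1) / 2`, a large part of
the algebra `F[x]` lies in the monoid `F^× H`. If `F^× H` had few elements, a nonzero polynomial of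
low degree would vanish on it. By Schwartz-Zippel it would vanish on `K[x]` as well, with `K` the
algebraic closure of `F`, and thus on the monoid generated by `K[x]` and `y`. That monoid is Zariski
dense in the matrices: it contains the lines `1 + K p` for the eigenprojections `p` of `x` and for
enough of their conjugates to span the matrix algebra, nonzero trace making the zero pattern of `y`
aperiodic. So the index of `H` is bounded in terms of `n`, and the normal core of `H` has index less
than `q` when `q` is large. Hence the core meets every transvection group nontrivially. It then
contains all transvections, because conjugation by diagonal matrices multiplies their parameters by
squares and the squares generate `F` additively.
-/

open MvPolynomial (eval aeval homogeneousComponent)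

section CurvesThroughOrigin

variable {σ R : Type*} [CommRing R]

theorem aeval_mul_of_isHomogeneous {A : Type*} [CommSemiring A] [Algebra R A]
    {P : MvPolynomial σ R} {j : ℕ} (hP : P.IsHomogeneous j) (a : A) (y : σ → A) :
    aeval (fun i ↦ a * y i) P = a ^ j * aeval y P := by
  simp only [MvPolynomial.aeval_def, MvPolynomial.eval₂_eq, Finset.mul_sum]
  refine Finset.sum_congr rfl fun d hd ↦ ?_
  have hdeg : d.sum (fun _ k ↦ k) = j := by
    simpa [Finsupp.weight_apply] using hP (MvPolynomial.mem_support_iff.mp hd)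
  simp only [mul_pow, Finset.prod_mul_distrib, Finset.prod_pow_eq_pow_sum]
  rw [← hdeg, Finsupp.sum]
  ring

theorem eval_aeval (P : MvPolynomial σ R) (Y : σ → Polynomial R) (s : R) :
    (aeval Y P).eval s = eval (fun i ↦ (Y i).eval s) P := by
  rw [← Polynomial.coe_evalRingHom, MvPolynomial.aeval_def, MvPolynomial.hom_eval₂,
    MvPolynomial.eval, MvPolynomial.coe_eval₂Hom]
  congr 1
  ext
  simp

theorem eval_homogeneousComponent_of_aeval_eq_zero {P : MvPolynomial σ R} {Y : σ → Polynomial R}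
    (hPY : aeval (fun i ↦ Polynomial.X * Y i) P = 0) {j : ℕ}
    (hlow : ∀ i < j, homogeneousComponent i P = 0) :
    eval (fun i ↦ (Y i).eval 0) (homogeneousComponent j P) = 0 := by
  rcases lt_or_ge P.totalDegree j with hj | hj
  · rw [MvPolynomial.homogeneousComponent_eq_zero _ _ hj, map_zero]
  have hcoeff : (∑ i ∈ Finset.range (P.totalDegree + 1),
      Polynomial.X ^ i * aeval Y (homogeneousComponent i P)).coeff j = 0 := by
    rw [← Polynomial.coeff_zero j, ← hPY]
    conv_rhs => rw [← MvPolynomial.sum_homogeneousComponent P, map_sum]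
    simp only [aeval_mul_of_isHomogeneous
      (MvPolynomial.homogeneousComponent_isHomogeneous _ P)]
  rw [Polynomial.finsetSum_coeff, Finset.sum_eq_single_of_mem j (Finset.mem_range_succ_iff.mpr hj),
    Polynomial.coeff_X_pow_mul', if_pos le_rfl, Nat.sub_self, Polynomial.coeff_zero_eq_eval_zero,
    eval_aeval] at hcoeff
  · exact hcoeff
  · intro i _ hij
    rcases lt_or_gt_of_ne hij with h | h
    · simp [hlow i h]
    · rw [Polynomial.coeff_X_pow_mul', if_neg h.not_ge]

theorem eq_zero_of_forall_exists_curve [IsDomain R] [Infinite R] {P : MvPolynomial σ R}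
    (h : ∀ x : σ → R, ∃ Y : σ → Polynomial R, (∀ i, (Y i).eval 0 = x i) ∧
      ∀ s, eval (fun i ↦ s * (Y i).eval s) P = 0) : P = 0 := by
  rw [← MvPolynomial.sum_homogeneousComponent P]
  refine Finset.sum_eq_zero fun j _ ↦ ?_
  induction j using Nat.strong_induction_on with
  | _ j ih =>
    refine MvPolynomial.funext fun x ↦ ?_
    obtain ⟨Y, hYx, hY⟩ := h x
    obtain rfl : (fun i ↦ (Y i).eval 0) = x := funext hYx
    have hPY : aeval (fun i ↦ Polynomial.X * Y i) P = 0 :=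
      Polynomial.funext fun s ↦ by simpa [eval_aeval] using hY s
    rw [map_zero]
    exact eval_homogeneousComponent_of_aeval_eq_zero hPY fun i hi ↦ by
      by_cases hi' : i ∈ Finset.range (P.totalDegree + 1)
      · exact ih i hi hi'
      · exact MvPolynomial.homogeneousComponent_eq_zero _ _ (by simpa using hi')

end CurvesThroughOrigin

section TangentSpan

variable {K A B : Type*} [Field K] [Ring A] [Algebra K A] [Ring B] [Algebra K B]

/-- The span of the directions `p` of the affine lines `1 + K p` through the identity that lie in
the monoid `M`; it plays the role of the tangent space of `M` at the identity. -/
def tangentSpan (K : Type*) {A : Type*} [Field K] [Ring A] [Algebra K A] (M : Submonoid A) :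
    Submodule K A :=
  Submodule.span K {p | ∀ t : K, 1 + t • p ∈ M}

theorem tangentSpan_comap_le (φ : A →ₐ[K] B) (M : Submonoid B) :
    tangentSpan K (M.comap φ) ≤ (tangentSpan K M).comap φ.toLinearMap :=
  Submodule.span_le.mpr fun p hp ↦ Submodule.subset_span fun t ↦ by simpa using hp t

theorem tangentSpan_eq_top_of_comap {φ : A →ₐ[K] B} (hφ : Function.Surjective φ) {M : Submonoid B}
    (hM : tangentSpan K (M.comap φ) = ⊤) : tangentSpan K M = ⊤ := by
  refine Submodule.eq_top_iff'.mpr fun b ↦ ?_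
  obtain ⟨a, rfl⟩ := hφ b
  exact tangentSpan_comap_le φ M (hM ▸ Submodule.mem_top)

theorem mul_mul_mem_tangentSpan {M : Submonoid A} {u v : A} (hu : u ∈ M) (hv : v ∈ M)
    (huv : u * v = 1) {p : A} (hp : p ∈ tangentSpan K M) : u * p * v ∈ tangentSpan K M := by
  suffices h : tangentSpan K M ≤
      (tangentSpan K M).comap (LinearMap.mulRight K v ∘ₗ LinearMap.mulLeft K u) from h hp
  refine Submodule.span_le.mpr fun q hq ↦ Submodule.subset_span fun t ↦ ?_
  have hline : 1 + t • (u * q * v) = u * (1 + t • q) * v := by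
    rw [mul_add, add_mul, mul_one, huv, mul_smul_comm, smul_mul_assoc]
  change 1 + t • (u * q * v) ∈ M
  rw [hline]
  exact M.mul_mem (M.mul_mem hu (hq t)) hv

/-- The conjugates `u p u⁻¹` of `p` by `u = t e + (1 - e)` are
`e p e + (1 - e) p (1 - e) + t e p (1 - e) + t⁻¹ (1 - e) p e`, so the two outer summands can be
isolated by taking differences. -/
theorem peirce_mem_tangentSpan [Infinite K] {M : Submonoid A} {e : A} (he : IsIdempotentElem e)
    (heM : ∀ t : K, 1 + t • e ∈ M) {p : A} (hp : p ∈ tangentSpan K M) :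
    e * p * (1 - e) ∈ tangentSpan K M ∧ (1 - e) * p * e ∈ tangentSpan K M := by
  set S := tangentSpan K M
  set a := e * p * (1 - e) with ha
  set b := (1 - e) * p * e with hb
  have hab : ∀ t : K, t ≠ 0 → t ≠ 1 → a - t⁻¹ • b ∈ S := by
    intro t ht ht1
    have hinv : (1 + (t - 1) • e) * (1 + (t⁻¹ - 1) • e) = 1 := by
      simp only [mul_add, add_mul, one_mul, mul_one, smul_mul_assoc, mul_smul_comm, he.eq]
      match_scalars <;> field_simp
      ring
    have hconj := S.sub_mem (mul_mul_mem_tangentSpan (heM _) (heM _) hinv hp) hp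
    have hsmul : (1 + (t - 1) • e) * p * (1 + (t⁻¹ - 1) • e) - p = (t - 1) • (a - t⁻¹ • b) := by
      simp only [ha, hb, mul_add, add_mul, mul_sub, sub_mul, one_mul, mul_one, smul_mul_assoc,
        mul_smul_comm, mul_assoc]
      match_scalars <;> field_simp <;> ring
    exact (S.smul_mem_iff (sub_ne_zero.mpr ht1)).mp (hsmul ▸ hconj)
  classical
  obtain ⟨s, hs⟩ := Infinite.exists_notMem_finset ({0, 1} : Finset K)
  obtain ⟨t, ht⟩ := Infinite.exists_notMem_finset ({0, 1, s} : Finset K)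
  simp only [Finset.mem_insert, Finset.mem_singleton, not_or] at hs ht
  have hbS : b ∈ S := by
    refine (S.smul_mem_iff (sub_ne_zero.mpr (inv_injective.ne ht.2.2))).mp ?_
    convert S.sub_mem (hab s hs.1 hs.2) (hab t ht.1 ht.2.1) using 1
    rw [sub_smul]
    abel
  exact ⟨by simpa using S.add_mem (hab s hs.1 hs.2) (S.smul_mem s⁻¹ hbS), hbS⟩

end TangentSpan

section MatrixDensity

variable {ι K : Type*} [DecidableEq ι]

/-- The value of a polynomial in the entries of a matrix. -/
noncomputable def evalMatrix {ι R : Type*} [CommRing R] (P : MvPolynomial (ι × ι) R)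
    (Z : Matrix ι ι R) : R :=
  eval (fun ij ↦ Z ij.1 ij.2) P

theorem exists_evalMatrix_eq_evalMatrix_one_add {R : Type*} [CommRing R]
    (P : MvPolynomial (ι × ι) R) :
    ∃ Q : MvPolynomial (ι × ι) R, ∀ Z, evalMatrix Q Z = evalMatrix P (1 + Z) := by
  refine ⟨MvPolynomial.bind₁ (fun ij ↦ MvPolynomial.C ((1 : Matrix ι ι R) ij.1 ij.2) +
    MvPolynomial.X ij) P, fun Z ↦ ?_⟩
  rw [evalMatrix, evalMatrix, eval, MvPolynomial.eval₂Hom_bind₁]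
  congr 2
  ext ij
  simp

variable [Fintype ι] [Field K]

theorem exists_curve_of_mem_tangentSpan {M : Submonoid (Matrix ι ι K)} {Z : Matrix ι ι K}
    (hZ : Z ∈ tangentSpan K M) :
    ∃ Y : Matrix ι ι (Polynomial K), Y.map (Polynomial.eval 0) = Z ∧
      ∀ s : K, 1 + s • Y.map (Polynomial.eval s) ∈ M := by
  induction hZ using Submodule.closure_induction with
  | zero => exact ⟨0, by ext; simp, fun s ↦ by simp [Matrix.map_zero]⟩
  | add a b _ _ ha hb =>
    obtain ⟨Ya, rfl, hYaM⟩ := ha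
    obtain ⟨Yb, rfl, hYbM⟩ := hb
    have heval : ∀ s : K, (Ya + Yb + (Polynomial.X : Polynomial K) • (Ya * Yb)).map
        (Polynomial.eval s) = Ya.map (Polynomial.eval s) + Yb.map (Polynomial.eval s) +
          s • (Ya.map (Polynomial.eval s) * Yb.map (Polynomial.eval s)) := by
      intro s
      ext i j
      simp [Matrix.mul_apply, Polynomial.eval_finsetSum]
    refine ⟨_, by simpa using heval 0, fun s ↦ ?_⟩
    convert M.mul_mem (hYaM s) (hYbM s) using 1
    rw [heval]
    simp only [mul_add, add_mul, one_mul, mul_one, smul_add, smul_mul_assoc, mul_smul_comm]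
    abel
  | smul_mem c p hp =>
    refine ⟨(c • p).map Polynomial.C, by ext; simp, fun s ↦ ?_⟩
    convert hp (s * c) using 1
    ext
    simp [mul_assoc]

theorem evalMatrix_eq_zero_of_tangentSpan_eq_top [Infinite K] {M : Submonoid (Matrix ι ι K)}
    (hM : tangentSpan K M = ⊤) {P : MvPolynomial (ι × ι) K} (hP : ∀ Z ∈ M, evalMatrix P Z = 0)
    (Z : Matrix ι ι K) : evalMatrix P Z = 0 := by
  obtain ⟨Q, hQ⟩ := exists_evalMatrix_eq_evalMatrix_one_add P
  have hQ0 : Q = 0 := by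
    refine eq_zero_of_forall_exists_curve fun x ↦ ?_
    obtain ⟨Y, hYx, hYM⟩ := exists_curve_of_mem_tangentSpan
      (hM ▸ Submodule.mem_top : Matrix.of (fun i j ↦ x (i, j)) ∈ tangentSpan K M)
    refine ⟨fun ij ↦ Y ij.1 ij.2, fun ij ↦ congrFun₂ hYx ij.1 ij.2, fun s ↦ ?_⟩
    have := hQ (s • Y.map (Polynomial.eval s))
    rw [hP _ (hYM s)] at this
    exact this
  simpa [hQ0, evalMatrix] using (hQ (Z - 1)).symm

end MatrixDensity

section Support

/-- The zero pattern of a matrix, as a matrix with entries in `{0, 1} ⊆ ℕ`. Powers of it count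
walks in the directed graph whose edges are the nonzero entries. -/
noncomputable def supportMatrix {ι K : Type*} [Zero K] (y : Matrix ι ι K) : Matrix ι ι ℕ := by
  classical exact Matrix.of fun a b ↦ if y a b = 0 then 0 else 1

theorem supportMatrix_apply_ne_zero {ι K : Type*} [Zero K] {y : Matrix ι ι K} {a b : ι} :
    supportMatrix y a b ≠ 0 ↔ y a b ≠ 0 := by
  simp [supportMatrix]

variable {ι K : Type*} [Fintype ι] [DecidableEq ι] [Field K]

theorem pow_add_apply_ne_zero {A : Matrix ι ι ℕ} {r s : ℕ} {a b c : ι} (hab : (A ^ r) a b ≠ 0)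
    (hbc : (A ^ s) b c ≠ 0) : (A ^ (r + s)) a c ≠ 0 := by
  rw [pow_add, Matrix.mul_apply, ← Nat.pos_iff_ne_zero]
  exact Finset.sum_pos' (fun _ _ ↦ Nat.zero_le _)
    ⟨b, Finset.mem_univ b, Nat.mul_pos hab.pos hbc.pos⟩

theorem exists_forall_pow_apply_ne_zero {A : Matrix ι ι ℕ} {i : ι} (hi : A i i ≠ 0)
    (hA : ∀ a b, ∃ r, (A ^ r) a b ≠ 0) : ∃ r, ∀ a b, (A ^ r) a b ≠ 0 := by
  have hloop : ∀ r, (A ^ r) i i ≠ 0 := by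
    intro r
    induction r with
    | zero => simp
    | succ r ih => exact pow_add_apply_ne_zero ih (by simpa using hi)
  choose f hf using hA
  refine ⟨(∑ a, f a i) + ∑ b, f i b, fun a b ↦ pow_add_apply_ne_zero (b := i) ?_ ?_⟩
  · have h := pow_add_apply_ne_zero (hf a i) (hloop (∑ a, f a i - f a i))
    rwa [Nat.add_sub_cancel' (Finset.single_le_sum (f := fun a ↦ f a i) (fun _ _ ↦ Nat.zero_le _)
      (Finset.mem_univ a))] at h
  · have h := pow_add_apply_ne_zero (hloop (∑ b, f i b - f i b)) (hf i b)
    rwa [Nat.sub_add_cancel (Finset.single_le_sum (f := fun b ↦ f i b) (fun _ _ ↦ Nat.zero_le _)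
      (Finset.mem_univ b))] at h

theorem exists_supportMatrix_pow_ne_zero {lam : ι → K} {y : Matrix ι ι K}
    (hy : Algebra.adjoin K {Matrix.diagonal lam, y} = ⊤) (a b : ι) :
    ∃ r, (supportMatrix y ^ r) a b ≠ 0 := by
  let reachable : Subalgebra K (Matrix ι ι K) :=
    { carrier := {z | ∀ a b, z a b ≠ 0 → ∃ r, (supportMatrix y ^ r) a b ≠ 0}
      mul_mem' := by
        intro u v hu hv a b h
        obtain ⟨c, -, hc⟩ := Finset.exists_ne_zero_of_sum_ne_zero (Matrix.mul_apply (M := u) ▸ h)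
        obtain ⟨r, hr⟩ := hu a c (left_ne_zero_of_mul hc)
        obtain ⟨s, hs⟩ := hv c b (right_ne_zero_of_mul hc)
        exact ⟨r + s, pow_add_apply_ne_zero hr hs⟩
      add_mem' := by
        intro u v hu hv a b h
        by_cases hab : u a b = 0
        · exact hv a b (by simpa [hab] using h)
        · exact hu a b hab
      algebraMap_mem' := by
        intro c a b h
        rw [Matrix.algebraMap_matrix_apply] at h
        exact ⟨0, by aesop⟩ }
  have htop : reachable = ⊤ := by
    rw [eq_top_iff, ← hy, Algebra.adjoin_le_iff]
    rintro z (rfl | rfl) a b h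
    · obtain rfl : a = b := by
        by_contra hab
        exact h (Matrix.diagonal_apply_ne _ hab)
      exact ⟨0, by simp⟩
    · exact ⟨1, by simpa using supportMatrix_apply_ne_zero.mpr h⟩
  have hsingle : Matrix.single a b (1 : K) ∈ reachable := htop ▸ Algebra.mem_top
  exact hsingle a b (by simp)

theorem exists_diagonal_mul_apply_ne_zero [Infinite K] (u v : Matrix ι ι K) :
    ∃ d : ι → K, (∀ i, d i ≠ 0) ∧
      ∀ a b i, u a i ≠ 0 → v i b ≠ 0 → (u * Matrix.diagonal d * v) a b ≠ 0 := by
  classical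
  let L (a b : ι) : MvPolynomial ι K := ∑ i, MvPolynomial.C (u a i * v i b) * MvPolynomial.X i
  have heval (a b : ι) (d : ι → K) : eval d (L a b) = (u * Matrix.diagonal d * v) a b := by
    rw [Matrix.mul_apply]
    simp only [L, map_sum, map_mul, MvPolynomial.eval_C, MvPolynomial.eval_X, Matrix.mul_diagonal,
      mul_right_comm]
  obtain ⟨d, hd⟩ : ∃ d, eval d ((∏ i, MvPolynomial.X i) *
      ∏ a, ∏ b, if L a b = 0 then 1 else L a b) ≠ 0 := by
    by_contra! h
    refine mul_ne_zero ?_ ?_ (MvPolynomial.funext fun d ↦ (h d).trans (map_zero _).symm)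
    · exact Finset.prod_ne_zero_iff.mpr fun i _ ↦ MvPolynomial.X_ne_zero i
    · refine Finset.prod_ne_zero_iff.mpr fun a _ ↦ Finset.prod_ne_zero_iff.mpr fun b _ ↦ ?_
      split_ifs with hL
      exacts [one_ne_zero, hL]
  simp only [map_mul, map_prod, MvPolynomial.eval_X, mul_ne_zero_iff, Finset.prod_ne_zero_iff,
    Finset.mem_univ, true_imp_iff] at hd
  refine ⟨d, hd.1, fun a b i hu hv ↦ ?_⟩
  have hL : L a b ≠ 0 := by
    intro h
    have hsingle := heval a b (Pi.single i 1)
    rw [Matrix.mul_apply] at hsingle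
    simp [h, Matrix.mul_diagonal, Pi.single_apply, hu, hv] at hsingle
  simpa [hL, heval] using hd.2 a b

theorem exists_mul_eq_one_of_supportMatrix_pow [Infinite K] {M : Submonoid (Matrix ι ι K)}
    (hD : ∀ d, Matrix.diagonal d ∈ M) {y y' : Matrix ι ι K} (hy : y ∈ M) (hy' : y' ∈ M)
    (hyy' : y * y' = 1) (r : ℕ) :
    ∃ w ∈ M, ∃ w' ∈ M, w * w' = 1 ∧ ∀ a b, (supportMatrix y ^ r) a b ≠ 0 → w a b ≠ 0 := by
  induction r with
  | zero => exact ⟨1, M.one_mem, 1, M.one_mem, one_mul 1, fun a b ↦ by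
      rw [pow_zero, Matrix.one_apply, Matrix.one_apply]; aesop⟩
  | succ r ih =>
    obtain ⟨w, hw, w', hw', hww', hsupp⟩ := ih
    obtain ⟨d, hd0, hd⟩ := exists_diagonal_mul_apply_ne_zero w y
    refine ⟨w * Matrix.diagonal d * y, M.mul_mem (M.mul_mem hw (hD d)) hy,
      y' * Matrix.diagonal d⁻¹ * w', M.mul_mem (M.mul_mem hy' (hD _)) hw', ?_, fun a b hab ↦ ?_⟩
    · have hdd : Matrix.diagonal d * Matrix.diagonal d⁻¹ = 1 := by
        simp [Matrix.diagonal_mul_diagonal, hd0]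
      calc _ = w * (Matrix.diagonal d * (y * y') * Matrix.diagonal d⁻¹) * w' := by
            simp only [mul_assoc]
        _ = 1 := by rw [hyy', mul_one, hdd, mul_one, hww']
    · rw [pow_succ, Matrix.mul_apply] at hab
      obtain ⟨c, -, hc⟩ := Finset.exists_ne_zero_of_sum_ne_zero hab
      exact hd a b c (hsupp a c (left_ne_zero_of_mul hc))
        (supportMatrix_apply_ne_zero.mp (right_ne_zero_of_mul hc))

theorem one_add_smul_single_mem {M : Submonoid (Matrix ι ι K)}
    (hD : ∀ d, Matrix.diagonal d ∈ M) (i : ι) (t : K) :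
    1 + t • Matrix.single i i (1 : K) ∈ M := by
  convert hD (1 + Pi.single i t) using 1
  rw [← Matrix.diagonal_one', Matrix.smul_single, ← Matrix.diagonal_single, Matrix.diagonal_add]
  congr 1
  ext
  simp

theorem single_mem_tangentSpan_of_apply_ne_zero [Infinite K] {M : Submonoid (Matrix ι ι K)}
    (hD : ∀ d, Matrix.diagonal d ∈ M) {p : Matrix ι ι K} (hp : p ∈ tangentSpan K M) {a b : ι}
    (hab : a ≠ b) (hpab : p a b ≠ 0) : Matrix.single a b (1 : K) ∈ tangentSpan K M := by
  have hidem (i : ι) : IsIdempotentElem (Matrix.single i i (1 : K)) := by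
    simp [IsIdempotentElem]
  have hcorner := (peirce_mem_tangentSpan (hidem b) (one_add_smul_single_mem hD b)
    (peirce_mem_tangentSpan (hidem a) (one_add_smul_single_mem hD a) hp).1).2
  have hcorner_eq :
      (1 - Matrix.single b b 1) * (Matrix.single a a 1 * p * (1 - Matrix.single a a 1)) *
        Matrix.single b b 1 = p a b • Matrix.single a b 1 := by
    have hba : Matrix.single b b (1 : K) * Matrix.single a a 1 = 0 := by simp [hab.symm]
    have hab' : Matrix.single a a (1 : K) * Matrix.single b b 1 = 0 := by simp [hab]
    calc _ = Matrix.single a a 1 * p * Matrix.single b b 1 := by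
          simp only [sub_mul, mul_sub, one_mul, mul_one, ← mul_assoc, hba, sub_zero]
          simp only [mul_assoc, hab', mul_zero, sub_zero]
      _ = _ := by
          rw [Matrix.single_mul_mul_single]
          simp
  rw [hcorner_eq] at hcorner
  exact ((tangentSpan K M).smul_mem_iff hpab).mp hcorner

theorem tangentSpan_eq_top_of_forall_apply_ne_zero [Infinite K] {M : Submonoid (Matrix ι ι K)}
    (hD : ∀ d, Matrix.diagonal d ∈ M) {w w' : Matrix ι ι K} (hw : w ∈ M) (hw' : w' ∈ M)
    (hww' : w * w' = 1) (hne : ∀ a b, w a b ≠ 0) : tangentSpan K M = ⊤ := by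
  have hE (i : ι) : Matrix.single i i (1 : K) ∈ tangentSpan K M :=
    Submodule.subset_span (one_add_smul_single_mem hD i)
  suffices hsingle : ∀ a b, Matrix.single a b (1 : K) ∈ tangentSpan K M by
    refine Submodule.eq_top_iff'.mpr fun z ↦ ?_
    rw [Matrix.matrix_eq_sum_single z]
    refine Submodule.sum_mem _ fun a _ ↦ Submodule.sum_mem _ fun b _ ↦ ?_
    simpa using Submodule.smul_mem _ (z a b) (hsingle a b)
  intro a b
  rcases eq_or_ne a b with rfl | hab
  · exact hE a
  obtain ⟨i, hi⟩ : ∃ i, w' i b ≠ 0 := by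
    by_contra! h
    simpa [Matrix.mul_apply, h] using congrFun₂ hww' b b
  have hpab : (w * Matrix.single i i (1 : K) * w' : Matrix ι ι K) a b = w a i * w' i b := by
    rw [← Matrix.diagonal_single, Matrix.mul_apply]
    simp [Matrix.mul_diagonal, Pi.single_apply]
  exact single_mem_tangentSpan_of_apply_ne_zero hD (mul_mul_mem_tangentSpan hw hw' hww' (hE i)) hab
    (hpab ▸ mul_ne_zero (hne a i) hi)

end Support

section SeparableElement

variable {ι K : Type*} [Fintype ι] [DecidableEq ι] [Field K]

theorem exists_aeval_diagonal_eq {lam : ι → K} (hlam : Function.Injective lam) (d : ι → K) :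
    ∃ p : Polynomial K, Polynomial.aeval (Matrix.diagonal lam) p = Matrix.diagonal d := by
  refine ⟨Lagrange.interpolate Finset.univ lam d, ?_⟩
  rw [← Matrix.diagonalAlgHom_apply (R := K), Polynomial.aeval_algHom_apply,
    Matrix.diagonalAlgHom_apply]
  congr 1
  ext i
  rw [← Lagrange.eval_interpolate_at_node d hlam.injOn (Finset.mem_univ i),
    ← Polynomial.coe_aeval_eq_eval, ← Pi.evalAlgHom_apply K (fun _ ↦ K) i lam,
    Polynomial.aeval_algHom_apply]
  rfl

theorem exists_conj_diagonal_eq {x : Matrix ι ι K} (hsplits : x.charpoly.Splits)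
    (hsep : x.charpoly.Separable) :
    ∃ (g : (Matrix ι ι K)ˣ) (lam : ι → K), Function.Injective lam ∧
      ConjAct.toConjAct g • Matrix.diagonal lam = x := by
  classical
  have hcard : Fintype.card ι = Fintype.card x.charpoly.roots.toFinset := by
    rw [Fintype.card_coe, Multiset.toFinset_card_of_nodup (Polynomial.nodup_roots hsep),
      ← hsplits.natDegree_eq_card_roots, Matrix.charpoly_natDegree_eq_dim]
  let e := Fintype.equivOfCardEq hcard
  have hlam : Function.Injective fun i ↦ (e i : K) := Subtype.val_injective.comp e.injective
  have heigen (i : ι) : Module.End.HasEigenvalue (Matrix.toLin' x) (e i : K) := by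
    rw [Module.End.hasEigenvalue_iff_isRoot_charpoly, Matrix.charpoly_toLin']
    exact Polynomial.isRoot_of_mem_roots (Multiset.mem_toFinset.mp (e i).2)
  choose v hv using fun i ↦ (heigen i).exists_hasEigenvector
  have hunit : IsUnit (Matrix.of v).transpose := by
    rw [← Matrix.linearIndependent_cols_iff_isUnit]
    exact Module.End.eigenvectors_linearIndependent' _ _ hlam v hv
  refine ⟨hunit.unit, fun i ↦ e i, hlam, ?_⟩
  rw [ConjAct.units_smul_def, ConjAct.ofConjAct_toConjAct, Units.mul_inv_eq_iff_eq_mul]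
  ext a b
  rw [IsUnit.unit_spec, Matrix.mul_diagonal, Matrix.transpose_apply, Matrix.of_apply, mul_comm]
  exact (congrFun (hv b).apply_eq_smul a).symm

theorem tangentSpan_eq_top_of_diagonal [Infinite K] {M : Submonoid (Matrix ι ι K)}
    (hD : ∀ d, Matrix.diagonal d ∈ M) {y y' : Matrix ι ι K} (hy : y ∈ M) (hy' : y' ∈ M)
    (hyy' : y * y' = 1) {lam : ι → K} (hadj : Algebra.adjoin K {Matrix.diagonal lam, y} = ⊤)
    (htr : y.trace ≠ 0) : tangentSpan K M = ⊤ := by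
  obtain ⟨i, -, hi⟩ := Finset.exists_ne_zero_of_sum_ne_zero htr
  obtain ⟨r, hr⟩ := exists_forall_pow_apply_ne_zero (supportMatrix_apply_ne_zero.mpr hi)
    (exists_supportMatrix_pow_ne_zero hadj)
  obtain ⟨w, hw, w', hw', hww', hsupp⟩ := exists_mul_eq_one_of_supportMatrix_pow hD hy hy' hyy' r
  exact tangentSpan_eq_top_of_forall_apply_ne_zero hD hw hw' hww' fun a b ↦ hsupp a b (hr a b)

theorem tangentSpan_eq_top [Infinite K] {M : Submonoid (Matrix ι ι K)} {x y y' : Matrix ι ι K}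
    (hsplits : x.charpoly.Splits) (hsep : x.charpoly.Separable)
    (hx : ∀ p : Polynomial K, Polynomial.aeval x p ∈ M) (hy : y ∈ M) (hy' : y' ∈ M)
    (hyy' : y * y' = 1) (hadj : Algebra.adjoin K {x, y} = ⊤) (htr : y.trace ≠ 0) :
    tangentSpan K M = ⊤ := by
  obtain ⟨g, lam, hlam, rfl⟩ := exists_conj_diagonal_eq hsplits hsep
  let φ : Matrix ι ι K ≃ₐ[K] Matrix ι ι K :=
    MulSemiringAction.toAlgEquiv K _ (ConjAct.toConjAct g)
  obtain ⟨z, rfl⟩ := φ.surjective y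
  obtain ⟨z', rfl⟩ := φ.surjective y'
  have hmap : Subalgebra.map φ.toAlgHom (Algebra.adjoin K {Matrix.diagonal lam, z}) =
      Subalgebra.map φ.toAlgHom ⊤ := by
    rw [AlgHom.map_adjoin, Set.image_pair, Algebra.map_top,
      (AlgHom.range_eq_top _).mpr φ.surjective]
    exact hadj
  have htrace : (φ z).trace = z.trace := Matrix.trace_units_conj g z
  refine tangentSpan_eq_top_of_comap (φ := φ.toAlgHom) φ.surjective
    (tangentSpan_eq_top_of_diagonal (fun d ↦ ?_) hy hy' (φ.injective ?_)
      (Subalgebra.map_injective φ.injective hmap) (htrace ▸ htr))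
  · obtain ⟨p, hp⟩ := exists_aeval_diagonal_eq hlam d
    have hxp := hx p
    rwa [show ConjAct.toConjAct g • Matrix.diagonal lam = φ.toAlgHom (Matrix.diagonal lam) from rfl,
      Polynomial.aeval_algHom_apply, hp] at hxp
  · rw [map_mul, hyy', map_one]

end SeparableElement

section PolynomialMethod

theorem totalDegree_aeval_le {σ τ R : Type*} [CommRing R] (P : MvPolynomial σ R)
    {f : σ → MvPolynomial τ R} {d : ℕ} (hf : ∀ i, (f i).totalDegree ≤ d) :
    (aeval f P).totalDegree ≤ P.totalDegree * d := by
  rw [MvPolynomial.aeval_def, MvPolynomial.eval₂_eq]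
  refine MvPolynomial.totalDegree_finsetSum_le fun m hm ↦ ?_
  calc _ ≤ (∏ i ∈ m.support, f i ^ m i).totalDegree := by
        refine (MvPolynomial.totalDegree_mul _ _).trans ?_
        rw [MvPolynomial.algebraMap_eq, MvPolynomial.totalDegree_C, zero_add]
    _ ≤ ∑ i ∈ m.support, m i * d :=
        (MvPolynomial.totalDegree_finsetProd _ _).trans <| Finset.sum_le_sum fun i _ ↦
          (MvPolynomial.totalDegree_pow _ _).trans <| Nat.mul_le_mul_left _ (hf i)
    _ ≤ P.totalDegree * d := by
        rw [← Finset.sum_mul]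
        exact Nat.mul_le_mul_right d (MvPolynomial.le_totalDegree hm)

theorem exists_ne_zero_forall_eval_eq_zero {σ T K : Type*} [Fintype σ] [Fintype T]
    [Field K] {k : ℕ} (x : T → σ → K) (hT : Fintype.card T < k ^ Fintype.card σ) :
    ∃ P : MvPolynomial σ K, P ≠ 0 ∧ P.totalDegree ≤ Fintype.card σ * k ∧ ∀ t, eval (x t) P = 0 := by
  classical
  let N : Finset (σ →₀ ℕ) := Finset.univ.finsupp fun _ ↦ Finset.range k
  let V := MvPolynomial.restrictSupport K (N : Set (σ →₀ ℕ))
  have hV : Module.finrank K V = k ^ Fintype.card σ := by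
    rw [Module.finrank_eq_card_basis (MvPolynomial.basisRestrictSupport K (N : Set (σ →₀ ℕ)))]
    simp [N, Finset.card_finsupp]
  let evalAt : V →ₗ[K] T → K :=
    LinearMap.pi fun t ↦ (aeval (x t)).toLinearMap ∘ₗ V.subtype
  have : FiniteDimensional K V := Module.finite_of_finrank_pos (by omega)
  have hker : LinearMap.ker evalAt ≠ ⊥ := by
    apply LinearMap.ker_ne_bot_of_finrank_lt
    rwa [hV, Module.finrank_fintype_fun_eq_card]
  obtain ⟨P, hP, hP0⟩ := Submodule.exists_mem_ne_zero_of_ne_bot hker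
  refine ⟨P, by simpa using hP0, ?_, fun t ↦ by
    simpa [evalAt, MvPolynomial.aeval_eq_eval] using congrFun hP t⟩
  refine Finset.sup_le fun m hm ↦ ?_
  have hmk := Finset.mem_finsupp_iff.mp ((MvPolynomial.mem_restrictSupport_iff _).mp P.2 hm)
  rw [Finsupp.sum_fintype _ _ fun _ ↦ rfl]
  refine (Finset.sum_le_card_nsmul _ _ k fun i _ ↦ ?_).trans_eq (by simp)
  simpa using (Finset.mem_range.mp (hmk.2 i (Finset.mem_univ i))).le

theorem eq_zero_of_card_mul_lt {α R : Type*} [Fintype α] [CommRing R] [IsDomain R] (f : α ↪ R)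
    {n : ℕ} {P : MvPolynomial (Fin n) R} {S : Finset (Fin n → α)}
    (hPS : ∀ c ∈ S, eval (f ∘ c) P = 0)
    (hS : P.totalDegree * Fintype.card α ^ n < S.card * Fintype.card α) : P = 0 := by
  classical
  by_contra hP
  have hα : (0 : ℚ≥0) < Fintype.card α := by
    exact_mod_cast Nat.pos_of_ne_zero fun h ↦ by simp [h] at hS
  have hzeros := MvPolynomial.schwartz_zippel_totalDegree hP (Finset.univ.map f)
  rw [Finset.card_map, Finset.card_univ, div_le_div_iff₀ (pow_pos hα n) hα] at hzeros
  refine hS.not_ge (le_trans (Nat.mul_le_mul_right _ ?_) (mod_cast hzeros))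
  refine Finset.card_le_card_of_injOn (fun c ↦ f ∘ c) (fun c hc ↦ ?_) f.injective.comp_left.injOn
  simpa using hPS c hc

variable {ι F K : Type*}

theorem exists_eval_eq_evalMatrix_sum_smul {τ : Type*} [CommRing K] [Nontrivial K] [Fintype τ]
    (P : MvPolynomial (ι × ι) K) (E : τ → Matrix ι ι K) :
    ∃ Q : MvPolynomial τ K, Q.totalDegree ≤ P.totalDegree ∧
      ∀ c, eval c Q = evalMatrix P (∑ t, c t • E t) := by
  refine ⟨aeval (fun ij ↦ ∑ t, MvPolynomial.C (E t ij.1 ij.2) * MvPolynomial.X t) P, ?_,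
    fun c ↦ ?_⟩
  · refine (totalDegree_aeval_le P fun ij ↦ ?_).trans_eq (mul_one _)
    refine MvPolynomial.totalDegree_finsetSum_le fun t _ ↦
      (MvPolynomial.totalDegree_mul _ _).trans ?_
    rw [MvPolynomial.totalDegree_C, zero_add]
    exact (MvPolynomial.totalDegree_X t).le
  · rw [evalMatrix, ← MvPolynomial.aeval_eq_eval, MvPolynomial.comp_aeval_apply,
      MvPolynomial.aeval_eq_eval]
    congr 2
    ext ij
    simp [Matrix.sum_apply, mul_comm]

variable [Field F] [Fintype F] [Field K] [Algebra F K]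

theorem evalMatrix_sum_smul_eq_zero {n : ℕ} {P : MvPolynomial (ι × ι) K}
    {E : Fin n → Matrix ι ι K} {S : Finset (Fin n → F)}
    (hP : ∀ c ∈ S, evalMatrix P (∑ i, c i • E i) = 0)
    (hS : P.totalDegree * Fintype.card F ^ n < S.card * Fintype.card F) (c : Fin n → K) :
    evalMatrix P (∑ i, c i • E i) = 0 := by
  obtain ⟨Q, hQdeg, hQ⟩ := exists_eval_eq_evalMatrix_sum_smul P E
  suffices hQ0 : Q = 0 by rw [← hQ, hQ0, map_zero]
  refine eq_zero_of_card_mul_lt ⟨algebraMap F K, (algebraMap F K).injective⟩ (fun c hc ↦ ?_)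
    ((Nat.mul_le_mul_right _ hQdeg).trans_lt hS)
  rw [hQ, ← hP c hc]
  simp [algebraMap_smul]

end PolynomialMethod

section CardinalityBound

variable {ι F : Type*} [Fintype ι] [DecidableEq ι]

theorem exists_sum_smul_pow_eq_aeval {R : Type*} [CommRing R] (x : Matrix ι ι R)
    (p : Polynomial R) :
    ∃ c : Fin (Fintype.card ι) → R, ∑ i, c i • x ^ (i : ℕ) = Polynomial.aeval x p := by
  nontriviality R
  refine ⟨fun i ↦ (p %ₘ x.charpoly).coeff i, ?_⟩
  have hdeg : (p %ₘ x.charpoly).degree < (Fintype.card ι : ℕ) := by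
    rw [← x.charpoly_degree_eq_dim]
    exact Polynomial.degree_modByMonic_lt p x.charpoly_monic
  rw [← Polynomial.aeval_modByMonic_eq_self_of_root x.aeval_self_charpoly, Polynomial.aeval_def,
    Polynomial.eval₂_eq_sum, ← Polynomial.sum_fin _ (by simp) hdeg]
  simp only [Algebra.smul_def]

variable [Field F]

theorem exists_card_eq_forall_sum_smul_pow_mem [Finite F] (x : Matrix ι ι F)
    (Γ : Set (Matrix ι ι F)) :
    ∃ S : Finset (Fin (Fintype.card ι) → F), S.card = (Γ ∩ Algebra.adjoin F {x}).ncard ∧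
      ∀ c ∈ S, ∑ i, c i • x ^ (i : ℕ) ∈ Γ := by
  have hcoord : ∀ z ∈ Γ ∩ Algebra.adjoin F {x}, ∃ c : Fin (Fintype.card ι) → F,
      ∑ i, c i • x ^ (i : ℕ) = z := by
    rintro z ⟨-, hz⟩
    rw [Algebra.adjoin_singleton_eq_range_aeval] at hz
    obtain ⟨p, rfl⟩ := hz
    exact exists_sum_smul_pow_eq_aeval x p
  choose! φ hφ using hcoord
  have hinj : Set.InjOn φ (Γ ∩ Algebra.adjoin F {x}) := fun a ha b hb hab ↦ by
    rw [← hφ a ha, ← hφ b hb, hab]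
  refine ⟨(φ '' (Γ ∩ Algebra.adjoin F {x})).toFinite.toFinset, ?_, ?_⟩
  · rw [← Set.ncard_eq_toFinset_card _, hinj.ncard_image]
  · simp only [Set.Finite.mem_toFinset, Set.forall_mem_image]
    exact fun z hz ↦ (hφ z hz).symm ▸ hz.1

variable {K : Type*} [Field K] [Algebra F K]

theorem adjoin_map_eq_top {s : Set (Matrix ι ι F)} (hs : Algebra.adjoin F s = ⊤) :
    Algebra.adjoin K ((algebraMap F K).mapMatrix '' s) = ⊤ := by
  let φ : Matrix ι ι F →ₐ[F] Matrix ι ι K := (Algebra.ofId F K).mapMatrix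
  have hφ : ∀ z, φ z ∈ Algebra.adjoin K ((algebraMap F K).mapMatrix '' s) := by
    have : Algebra.adjoin F s ≤
        ((Algebra.adjoin K ((algebraMap F K).mapMatrix '' s)).restrictScalars F).comap φ :=
      Algebra.adjoin_le fun z hz ↦ Algebra.subset_adjoin ⟨z, hz, rfl⟩
    exact fun z ↦ this (hs ▸ Algebra.mem_top)
  refine Algebra.eq_top_iff.mpr fun z ↦ ?_
  rw [Matrix.matrix_eq_sum_single z]
  refine Subalgebra.sum_mem _ fun a _ ↦ Subalgebra.sum_mem _ fun b _ ↦ ?_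
  have hab := Subalgebra.smul_mem _ (hφ (Matrix.single a b 1)) (z a b)
  simpa [φ] using hab

variable [Fintype F]

theorem evalMatrix_eq_zero_of_mem_closure {x : Matrix ι ι F} {Γ : Submonoid (Matrix ι ι F)}
    {P : MvPolynomial (ι × ι) K} (hP : ∀ Z ∈ Γ, evalMatrix P (Z.map (algebraMap F K)) = 0)
    (hx : P.totalDegree * Fintype.card F ^ Fintype.card ι <
      ((Γ : Set (Matrix ι ι F)) ∩ Algebra.adjoin F {x}).ncard * Fintype.card F)
    {Z : Matrix ι ι K} (hZ : Z ∈ Submonoid.closure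
      (Set.range (Polynomial.aeval (R := K) (x.map (algebraMap F K))) ∪
        Γ.map (algebraMap F K).mapMatrix)) : evalMatrix P Z = 0 := by
  obtain ⟨S, hScard, hS⟩ := exists_card_eq_forall_sum_smul_pow_mem x (Γ : Set (Matrix ι ι F))
  rw [← hScard] at hx
  let φ : Matrix ι ι F →ₐ[F] Matrix ι ι K := (Algebra.ofId F K).mapMatrix
  suffices h : ∀ g ∈ Γ, evalMatrix P (φ g * Z) = 0 by simpa using h 1 Γ.one_mem
  induction hZ using Submonoid.closure_induction_left with
  | one => exact fun g hg ↦ (mul_one (φ g)).symm ▸ hP g hg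
  | mul_left b hb B _ ih =>
    intro g hg
    rcases hb with ⟨p, rfl⟩ | ⟨h, hh, rfl⟩
    · obtain ⟨c, hc⟩ := exists_sum_smul_pow_eq_aeval (φ x) p
      have hlin : φ g * ((∑ i, c i • φ x ^ (i : ℕ)) * B) =
          ∑ i, c i • (φ g * φ x ^ (i : ℕ) * B) := by
        simp only [Finset.sum_mul, Finset.mul_sum, smul_mul_assoc, mul_smul_comm, mul_assoc]
      change evalMatrix P (φ g * (Polynomial.aeval (φ x) p * B)) = 0
      rw [← hc, hlin]
      refine evalMatrix_sum_smul_eq_zero (fun c hc ↦ ?_) hx c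
      convert ih _ (Γ.mul_mem hg (hS c hc)) using 2
      simp only [map_mul, map_sum, map_smul, map_pow, Finset.mul_sum, Finset.sum_mul,
        smul_mul_assoc, mul_smul_comm]
    · rw [← mul_assoc]
      change evalMatrix P (φ g * φ h * B) = 0
      rw [← map_mul]
      exact ih _ (Γ.mul_mem hg hh)

/-- A nonzero polynomial of small degree vanishing on `Γ` would vanish on the monoid generated by
`Γ` and the polynomials in `x` over the algebraic closure, which is Zariski dense. -/
theorem pow_card_sq_le_card {Γ : Submonoid (Matrix ι ι F)} {x y y' : Matrix ι ι F}
    (hsep : x.charpoly.Separable) (hy : y ∈ Γ) (hy' : y' ∈ Γ) (hyy' : y * y' = 1)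
    (hadj : Algebra.adjoin F {x, y} = ⊤) (htr : y.trace ≠ 0) {k : ℕ}
    (hx : Fintype.card ι ^ 2 * k * Fintype.card F ^ Fintype.card ι <
      ((Γ : Set (Matrix ι ι F)) ∩ Algebra.adjoin F {x}).ncard * Fintype.card F) :
    k ^ (Fintype.card ι ^ 2) ≤ Nat.card Γ := by
  classical
  by_contra! hcard
  let K := AlgebraicClosure F
  let φ : Matrix ι ι F →+* Matrix ι ι K := (algebraMap F K).mapMatrix
  obtain ⟨P, hP0, hPdeg, hP⟩ := exists_ne_zero_forall_eval_eq_zero (K := K) (k := k)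
    (fun (Z : Γ) (ij : ι × ι) ↦ φ Z ij.1 ij.2)
    (by rwa [← Nat.card_eq_fintype_card, Fintype.card_prod, ← pow_two])
  rw [Fintype.card_prod, ← pow_two] at hPdeg
  have : Infinite K := IsAlgClosed.instInfinite
  refine hP0 (MvPolynomial.funext fun v ↦ ?_)
  refine evalMatrix_eq_zero_of_tangentSpan_eq_top (tangentSpan_eq_top
    (x := φ x) (y := φ y) (y' := φ y') (IsAlgClosed.splits _) ?_
    (fun p ↦ Submonoid.subset_closure (Or.inl ⟨p, rfl⟩))
    (Submonoid.subset_closure (Or.inr ⟨y, hy, rfl⟩))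
    (Submonoid.subset_closure (Or.inr ⟨y', hy', rfl⟩)) (by rw [← map_mul, hyy', map_one]) ?_ ?_)
    (fun Z hZ ↦ evalMatrix_eq_zero_of_mem_closure (fun Z hZ ↦ hP ⟨Z, hZ⟩)
      ((Nat.mul_le_mul_right _ hPdeg).trans_lt hx) hZ) (Matrix.of fun i j ↦ v (i, j))
  · rw [RingHom.mapMatrix_apply, Matrix.charpoly_map]
    exact hsep.map
  · rw [← Set.image_pair]
    exact adjoin_map_eq_top hadj
  · rw [RingHom.mapMatrix_apply]
    have htrace : (y.map (algebraMap F K)).trace = algebraMap F K y.trace := by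
      simp [Matrix.trace]
    rwa [htrace, Ne, map_eq_zero]

end CardinalityBound

section ScalarMultiples

variable {ι F : Type*} [Fintype ι] [DecidableEq ι] [Field F]

/-- The multiplication map `Fˣ × SL(ι, F) → Matrix ι ι F`, `(z, h) ↦ z h`. -/
def unitsSMulHom (ι F : Type*) [Fintype ι] [DecidableEq ι] [Field F] :
    Fˣ × Matrix.SpecialLinearGroup ι F →* Matrix ι ι F where
  toFun a := a.1 • (a.2 : Matrix ι ι F)
  map_one' := by simp
  map_mul' a b := by simp [smul_mul_smul_comm]

@[simp]
theorem unitsSMulHom_apply (z : Fˣ) (h : Matrix.SpecialLinearGroup ι F) :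
    unitsSMulHom ι F (z, h) = z • (h : Matrix ι ι F) :=
  rfl

theorem card_le_card_mul_card_image_unitsSMulHom [Nonempty ι] [DecidableEq F]
    (T : Finset (Fˣ × Matrix.SpecialLinearGroup ι F)) :
    T.card ≤ Fintype.card ι * (T.image (unitsSMulHom ι F)).card := by
  refine Finset.card_le_mul_card_image T _ fun Z hZ ↦ ?_
  obtain ⟨⟨z₀, h₀⟩, -, rfl⟩ := Finset.mem_image.mp hZ
  have hroot : ∀ a ∈ T.filter (unitsSMulHom ι F · = unitsSMulHom ι F (z₀, h₀)),
      (a.1 : F) ∈ Polynomial.nthRootsFinset (Fintype.card ι) ((z₀ : F) ^ Fintype.card ι) := by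
    rintro ⟨z, h⟩ ha
    have hdet := congrArg Matrix.det (Finset.mem_filter.mp ha).2
    rw [Polynomial.mem_nthRootsFinset Fintype.card_pos]
    simpa [Units.smul_def, Matrix.det_smul] using hdet
  refine (Finset.card_le_card_of_injOn _ hroot ?_).trans ?_
  · rintro ⟨z, h⟩ ha ⟨z', h'⟩ ha' hzz'
    obtain rfl : z = z' := Units.ext hzz'
    have hsmul : z • (h : Matrix ι ι F) = z • (h' : Matrix ι ι F) :=
      (Finset.mem_filter.mp ha).2.trans (Finset.mem_filter.mp ha').2.symm
    exact Prod.ext rfl (Subtype.ext (smul_left_cancel z hsmul))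
  · rw [Polynomial.nthRootsFinset_def]
    exact (Multiset.toFinset_card_le _).trans (Polynomial.card_nthRoots _ _)

/-- The monoid `Fˣ H` of the nonzero scalar multiples of the elements of `H`. -/
def scalarMultiples (H : Subgroup (Matrix.SpecialLinearGroup ι F)) : Submonoid (Matrix ι ι F) :=
  ((⊤ : Submonoid Fˣ).prod H.toSubmonoid).map (unitsSMulHom ι F)

theorem smul_mem_scalarMultiples {H : Subgroup (Matrix.SpecialLinearGroup ι F)}
    {h : Matrix.SpecialLinearGroup ι F} (hh : h ∈ H) (z : Fˣ) :
    z • (h : Matrix ι ι F) ∈ scalarMultiples H :=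
  ⟨(z, h), ⟨trivial, hh⟩, rfl⟩

theorem mem_scalarMultiples {H : Subgroup (Matrix.SpecialLinearGroup ι F)}
    {h : Matrix.SpecialLinearGroup ι F} (hh : h ∈ H) : (h : Matrix ι ι F) ∈ scalarMultiples H := by
  simpa using smul_mem_scalarMultiples hh 1

variable [Fintype F]

theorem card_scalarMultiples_le (H : Subgroup (Matrix.SpecialLinearGroup ι F)) :
    Nat.card (scalarMultiples H) ≤ (Fintype.card F - 1) * Nat.card H := by
  classical
  let P : Submonoid (Fˣ × Matrix.SpecialLinearGroup ι F) := (⊤ : Submonoid Fˣ).prod H.toSubmonoid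
  calc Nat.card (scalarMultiples H) ≤ Nat.card P :=
        Nat.card_le_card_of_surjective _ ((unitsSMulHom ι F).submonoidMap_surjective P)
    _ = Nat.card (⊤ : Submonoid Fˣ) * Nat.card H := by
        rw [← Nat.card_prod]
        exact Nat.card_congr (Submonoid.prodEquiv _ _).toEquiv
    _ = (Fintype.card F - 1) * Nat.card H := by
        rw [Nat.card_congr Submonoid.topEquiv.toEquiv, Nat.card_eq_fintype_card, Fintype.card_units]

theorem card_sub_one_mul_orderOf_le [Nonempty ι] {H : Subgroup (Matrix.SpecialLinearGroup ι F)}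
    {x : Matrix.SpecialLinearGroup ι F} (hx : x ∈ H) :
    (Fintype.card F - 1) * orderOf x ≤ Fintype.card ι * ((scalarMultiples H : Set (Matrix ι ι F)) ∩
      Algebra.adjoin F {(x : Matrix ι ι F)}).ncard := by
  classical
  let T : Finset (Fˣ × Matrix.SpecialLinearGroup ι F) :=
    Finset.univ ×ˢ (Subgroup.zpowers x : Set _).toFinset
  have hT : T.card = (Fintype.card F - 1) * orderOf x := by
    rw [Finset.card_product, Finset.card_univ, Fintype.card_units, Set.toFinset_card,
      ← Fintype.card_zpowers]
    rfl
  rw [← hT]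
  refine (card_le_card_mul_card_image_unitsSMulHom T).trans (Nat.mul_le_mul_left _ ?_)
  rw [← Set.ncard_coe_finset]
  refine Set.ncard_le_ncard ?_
  simp only [Finset.coe_image, Set.image_subset_iff]
  rintro ⟨z, h⟩ hzh
  obtain ⟨i, -, rfl⟩ : ∃ i < orderOf x, x ^ i = h := by
    simpa [T, mem_zpowers_iff_mem_range_orderOf] using hzh
  refine ⟨smul_mem_scalarMultiples (H.pow_mem hx i) z, ?_⟩
  simpa [Units.smul_def] using
    Subalgebra.smul_mem _ (pow_mem (Algebra.self_mem_adjoin_singleton F _) i) (z : F)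

/-- With `k` proportional to the cardinality of `F`, this bounds the index of `H` uniformly
in `F`. -/
theorem pow_card_sq_le_card_subgroup [Nonempty ι] {H : Subgroup (Matrix.SpecialLinearGroup ι F)}
    {x y : Matrix.SpecialLinearGroup ι F} (hx : x ∈ H) (hy : y ∈ H)
    (hsep : (x : Matrix ι ι F).charpoly.Separable)
    (hord : Fintype.card F ^ (Fintype.card ι - 1) ≤ 2 * orderOf x)
    (hadj : Algebra.adjoin F {(x : Matrix ι ι F), (y : Matrix ι ι F)} = ⊤)
    (htr : (y : Matrix ι ι F).trace ≠ 0) {k : ℕ}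
    (hk : 4 * Fintype.card ι ^ 3 * k < Fintype.card F) :
    k ^ (Fintype.card ι ^ 2) ≤ (Fintype.card F - 1) * Nat.card H := by
  refine (pow_card_sq_le_card hsep (mem_scalarMultiples hy) (mem_scalarMultiples (H.inv_mem hy))
    (by rw [← Matrix.SpecialLinearGroup.coe_mul, mul_inv_cancel,
      Matrix.SpecialLinearGroup.coe_one]) hadj htr ?_).trans (card_scalarMultiples_le H)
  have hcount := card_sub_one_mul_orderOf_le hx
  have hn : 0 < Fintype.card ι := Fintype.card_pos
  have hq : 2 ≤ Fintype.card F := Fintype.one_lt_card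
  set m := ((scalarMultiples H : Set (Matrix ι ι F)) ∩
      Algebra.adjoin F {(x : Matrix ι ι F)}).ncard
  set n := Fintype.card ι
  set q := Fintype.card F
  have hm : q ^ n ≤ 4 * n * m := by
    calc q ^ n = q ^ (n - 1) * q := by rw [← pow_succ, Nat.sub_add_cancel hn]
      _ ≤ (2 * orderOf x) * (2 * (q - 1)) := Nat.mul_le_mul hord (by omega)
      _ = 4 * ((q - 1) * orderOf x) := by ring
      _ ≤ 4 * n * m := by rw [mul_assoc]; exact Nat.mul_le_mul_left 4 hcount
  refine lt_of_mul_lt_mul_left (a := 4 * n) ?_ (Nat.zero_le _)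
  calc 4 * n * (n ^ 2 * k * q ^ n) = 4 * n ^ 3 * k * q ^ n := by ring
    _ < q * q ^ n := Nat.mul_lt_mul_of_pos_right hk (pow_pos (by omega) n)
    _ ≤ q * (4 * n * m) := Nat.mul_le_mul_left q hm
    _ = 4 * n * (m * q) := by ring

end ScalarMultiples

section SubgroupIndex

variable {ι F : Type*} [Fintype ι] [DecidableEq ι] [Field F]

theorem diag2n_coe_eq_one_add {i j : ι} (hij : i ≠ j) {a : F} (ha : a ≠ 0) :
    (Matrix.SpecialLinearGroup.diag2n hij a ha : Matrix ι ι F) =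
      1 + (a - 1) • Matrix.single i i 1 + (a⁻¹ - 1) • Matrix.single j j 1 := by
  rw [Matrix.SpecialLinearGroup.diag2n_coe]
  ext k l
  rcases eq_or_ne k l with rfl | hkl
  · simp only [Matrix.diagonal_apply_eq, Matrix.add_apply, Matrix.one_apply_eq, Matrix.smul_apply,
      Matrix.single_apply, smul_eq_mul, and_self]
    grind
  · simp only [Matrix.diagonal_apply_ne _ hkl, Matrix.add_apply, Matrix.one_apply_ne hkl,
      Matrix.smul_apply, Matrix.single_apply, smul_eq_mul]
    grind

theorem diag2n_eq_prod_transvection {i j : ι} (hij : i ≠ j) {a : F} (ha : a ≠ 0) :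
    Matrix.SpecialLinearGroup.diag2n hij a ha =
      Matrix.SpecialLinearGroup.transvection hij a *
      Matrix.SpecialLinearGroup.transvection hij.symm (-a⁻¹) *
      Matrix.SpecialLinearGroup.transvection hij (a - 1) *
      Matrix.SpecialLinearGroup.transvection hij.symm 1 *
      Matrix.SpecialLinearGroup.transvection hij (-1) := by
  apply Subtype.ext
  have hsingle (k l : ι) (c : F) : Matrix.single k l c = c • Matrix.single k l 1 := by simp
  simp only [Matrix.SpecialLinearGroup.coe_mul, Matrix.SpecialLinearGroup.transvection_coe,
    diag2n_coe_eq_one_add, mul_add, add_mul, one_mul, mul_one]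
  rw [hsingle i j a, hsingle j i (-a⁻¹), hsingle i j (a - 1), hsingle i j (-1)]
  simp only [smul_mul_assoc, mul_smul_comm, Matrix.single_mul_single_same, mul_one,
    Matrix.single_mul_single_of_ne _ _ _ _ hij, Matrix.single_mul_single_of_ne _ _ _ _ hij.symm,
    smul_zero, zero_mul, add_zero]
  match_scalars <;> field_simp <;> ring

theorem diag2n_mul_transvection_mul_inv {i j : ι} (hij : i ≠ j) {s : F} (hs : s ≠ 0) (t : F) :
    Matrix.SpecialLinearGroup.diag2n hij s hs * Matrix.SpecialLinearGroup.transvection hij t *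
      (Matrix.SpecialLinearGroup.diag2n hij s hs)⁻¹ =
      Matrix.SpecialLinearGroup.transvection hij (s ^ 2 * t) := by
  rw [mul_inv_eq_iff_eq_mul]
  ext k l
  simp only [Matrix.SpecialLinearGroup.coe_mul, Matrix.SpecialLinearGroup.transvection_coe,
    Matrix.SpecialLinearGroup.diag2n_coe, mul_add, add_mul, Matrix.add_apply,
    Matrix.diagonal_mul, Matrix.mul_diagonal, Matrix.one_apply, Matrix.single_apply]
  grind

theorem eq_top_of_forall_transvection_mem [Nontrivial ι]
    {N : Subgroup (Matrix.SpecialLinearGroup ι F)}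
    (hN : ∀ (i j : ι) (hij : i ≠ j) (a : F), Matrix.SpecialLinearGroup.transvection hij a ∈ N) :
    N = ⊤ := by
  refine eq_top_iff.mpr fun M _ ↦ Matrix.SpecialLinearGroup.diagonal_transvection_induction'
    (· ∈ N) M (fun i j hij c hc ↦ ?_) hN fun A B ↦ N.mul_mem
  rw [diag2n_eq_prod_transvection]
  exact N.mul_mem (N.mul_mem (N.mul_mem (N.mul_mem (hN _ _ _ _) (hN _ _ _ _)) (hN _ _ _ _))
    (hN _ _ _ _)) (hN _ _ _ _)

theorem index_normalCore_le_factorial {G : Type*} [Group G] (H : Subgroup G) [H.FiniteIndex] :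
    H.normalCore.index ≤ H.index.factorial := by
  rw [Subgroup.normalCore_eq_ker, Subgroup.index_ker, Subgroup.index_eq_card, ← Nat.card_perm]
  exact Subgroup.card_le_card_group _

/-- The additive group of the parameters of the `(i, j)`-transvections in a subgroup. -/
def transvectionParameters {i j : ι} (hij : i ≠ j)
    (N : Subgroup (Matrix.SpecialLinearGroup ι F)) : AddSubgroup F where
  carrier := {t | Matrix.SpecialLinearGroup.transvection hij t ∈ N}
  zero_mem' := by simp [Matrix.SpecialLinearGroup.transvection_coeff_zero, N.one_mem]
  add_mem' {a b} ha hb := by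
    rw [Set.mem_ofPred_eq, Matrix.SpecialLinearGroup.transvection_add]
    exact N.mul_mem ha hb
  neg_mem' {a} ha := by
    rw [Set.mem_ofPred_eq, ← Matrix.SpecialLinearGroup.transvection_inv]
    exact N.inv_mem ha

variable [Finite F]

theorem eq_top_of_sq_mul_mem {A : AddSubgroup F} (hA : ∀ s : F, s ≠ 0 → ∀ t ∈ A, s ^ 2 * t ∈ A)
    (hA0 : A ≠ ⊥) : A = ⊤ := by
  obtain ⟨t, htA, ht⟩ := A.bot_or_exists_ne_zero.resolve_left hA0
  have hsq (s : F) : s ^ 2 * t ∈ A := by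
    rcases eq_or_ne s 0 with rfl | hs
    · simp
    · exact hA s hs t htA
  refine eq_top_iff.mpr fun u _ ↦ ?_
  rcases eq_or_ne (2 : F) 0 with h2 | h2
  · have : CharP F 2 := CharTwo.of_one_ne_zero_of_two_eq_zero one_ne_zero h2
    obtain ⟨s, hs⟩ := FiniteField.isSquare_of_char_two (ringChar.eq_iff.mpr this) (u / t)
    simpa [sq, ← hs, div_mul_cancel₀ _ ht] using hsq s
  · have hdiff := A.sub_mem (hsq ((u / t + 1) / 2)) (hsq ((u / t - 1) / 2))
    convert hdiff using 1
    field_simp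
    ring

theorem transvectionParameters_ne_bot {i j : ι} (hij : i ≠ j)
    {N : Subgroup (Matrix.SpecialLinearGroup ι F)} (hN : N.index < Nat.card F) :
    transvectionParameters hij N ≠ ⊥ := by
  intro hbot
  have hinj : Function.Injective fun t : F ↦
      (Matrix.SpecialLinearGroup.transvection hij t : Matrix.SpecialLinearGroup ι F ⧸ N) := by
    intro a b hab
    have hmem : -a + b ∈ transvectionParameters hij N := by
      rwa [QuotientGroup.eq, Matrix.SpecialLinearGroup.transvection_inv,
        ← Matrix.SpecialLinearGroup.transvection_add] at hab
    rw [hbot, AddSubgroup.mem_bot] at hmem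
    linear_combination -hmem
  exact hN.not_ge (Nat.card_le_card_of_injective _ hinj)

theorem eq_top_of_factorial_index_lt [Nontrivial ι] {H : Subgroup (Matrix.SpecialLinearGroup ι F)}
    (hH : H.index.factorial < Nat.card F) : H = ⊤ := by
  suffices hN : H.normalCore = ⊤ from eq_top_iff.mpr (hN ▸ H.normalCore_le)
  refine eq_top_of_forall_transvection_mem fun i j hij a ↦ ?_
  have htop : transvectionParameters hij H.normalCore = ⊤ := by
    refine eq_top_of_sq_mul_mem (fun s hs t ht ↦ ?_)
      (transvectionParameters_ne_bot hij ((index_normalCore_le_factorial H).trans_lt hH))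
    change _ ∈ H.normalCore
    rw [← diag2n_mul_transvection_mul_inv hij hs]
    exact Subgroup.Normal.conj_mem inferInstance _ ht _
  exact htop.ge (AddSubgroup.mem_top a)

end SubgroupIndex

section Generation

variable {ι F : Type*} [Fintype ι] [DecidableEq ι] [Field F] [Fintype F]

theorem card_GL_eq_mul_card_SL [Nonempty ι] :
    Nat.card (Matrix.GeneralLinearGroup ι F) =
      (Fintype.card F - 1) * Nat.card (Matrix.SpecialLinearGroup ι F) := by
  have hker : (Matrix.GeneralLinearGroup.det : Matrix.GeneralLinearGroup ι F →* Fˣ).ker =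
      (Matrix.SpecialLinearGroup.toGL : Matrix.SpecialLinearGroup ι F →* _).range := by
    ext g
    refine ⟨fun hg ↦ ⟨⟨g, ?_⟩, Units.ext rfl⟩, ?_⟩
    · simpa [MonoidHom.mem_ker, Units.ext_iff] using hg
    · rintro ⟨s, rfl⟩
      simp [MonoidHom.mem_ker]
  rw [← Subgroup.index_mul_card (Matrix.GeneralLinearGroup.det (n := ι) (R := F)).ker,
    Subgroup.index_ker, MonoidHom.range_eq_top.mpr Matrix.GeneralLinearGroup.det_surjective,
    Subgroup.card_top, Nat.card_units, Nat.card_eq_fintype_card, hker,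
    ← Nat.card_congr (MonoidHom.ofInjective Matrix.SpecialLinearGroup.toGL_injective).toEquiv]

theorem card_sub_one_mul_card_SL_le [Nonempty ι] :
    (Fintype.card F - 1) * Nat.card (Matrix.SpecialLinearGroup ι F) ≤
      Fintype.card F ^ (Fintype.card ι ^ 2) := by
  rw [← card_GL_eq_mul_card_SL]
  refine (Nat.card_le_card_of_injective _ Units.val_injective).trans_eq ?_
  simp [Matrix, ← pow_mul, sq]

theorem pow_card_sq_le_two_pow_mul_card_SL [Nonempty ι] :
    Fintype.card F ^ (Fintype.card ι ^ 2) ≤ 2 ^ Fintype.card ι *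
      ((Fintype.card F - 1) * Nat.card (Matrix.SpecialLinearGroup ι F)) := by
  rw [← card_GL_eq_mul_card_SL, Nat.card_congr
    (Matrix.reindexAlgEquiv F F (Fintype.equivFin ι) |>.toMulEquiv |> Units.mapEquiv).toEquiv,
    Matrix.card_GL_field]
  set n := Fintype.card ι
  set q := Fintype.card F
  have hfactor (i : Fin n) : q ^ n ≤ 2 * (q ^ n - q ^ (i : ℕ)) := by
    have : 2 * q ^ (i : ℕ) ≤ q ^ n :=
      calc 2 * q ^ (i : ℕ) ≤ q * q ^ (i : ℕ) := Nat.mul_le_mul_right _ Fintype.one_lt_card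
        _ = q ^ ((i : ℕ) + 1) := (pow_succ' _ _).symm
        _ ≤ q ^ n := Nat.pow_le_pow_right Fintype.card_pos i.2
    omega
  calc q ^ (n ^ 2) = ∏ _i : Fin n, q ^ n := by simp [← pow_mul, sq]
    _ ≤ ∏ i : Fin n, 2 * (q ^ n - q ^ (i : ℕ)) := Finset.prod_le_prod' fun i _ ↦ hfactor i
    _ = 2 ^ n * ∏ i : Fin n, (q ^ n - q ^ (i : ℕ)) := by simp [Finset.prod_mul_distrib]

theorem index_le_of_adjoin_eq_top [Nonempty ι] {H : Subgroup (Matrix.SpecialLinearGroup ι F)}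
    {x y : Matrix.SpecialLinearGroup ι F} (hx : x ∈ H) (hy : y ∈ H)
    (hsep : (x : Matrix ι ι F).charpoly.Separable)
    (hord : Fintype.card F ^ (Fintype.card ι - 1) ≤ 2 * orderOf x)
    (hadj : Algebra.adjoin F {(x : Matrix ι ι F), (y : Matrix ι ι F)} = ⊤)
    (htr : (y : Matrix ι ι F).trace ≠ 0) (hq : 8 * Fintype.card ι ^ 3 ≤ Fintype.card F) :
    H.index ≤ (16 * Fintype.card ι ^ 3) ^ (Fintype.card ι ^ 2) := by
  have hbound := pow_card_sq_le_card_subgroup (k := Fintype.card F / (8 * Fintype.card ι ^ 3))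
    hx hy hsep hord hadj htr
  have hupper := card_sub_one_mul_card_SL_le (ι := ι) (F := F)
  have hq1 : 1 < Fintype.card F := Fintype.one_lt_card
  have hn : 0 < 8 * Fintype.card ι ^ 3 := by positivity
  set n := Fintype.card ι
  set q := Fintype.card F
  set k := q / (8 * n ^ 3)
  have hk0 : 0 < k := Nat.div_pos hq hn
  have hk : 8 * n ^ 3 * k ≤ q := Nat.mul_div_le _ _
  have hqk : q < 8 * n ^ 3 * (k + 1) := Nat.lt_mul_div_succ q hn
  have hlower : k ^ (n ^ 2) ≤ (q - 1) * Nat.card H := hbound (by nlinarith)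
  refine Nat.le_of_mul_le_mul_left (c := (q - 1) * Nat.card H) ?_
    (Nat.mul_pos (Nat.sub_pos_of_lt hq1) Nat.card_pos)
  calc (q - 1) * Nat.card H * H.index
      = (q - 1) * Nat.card (Matrix.SpecialLinearGroup ι F) := by rw [mul_assoc, H.card_mul_index]
    _ ≤ q ^ (n ^ 2) := hupper
    _ ≤ (16 * n ^ 3 * k) ^ (n ^ 2) := Nat.pow_le_pow_left (by nlinarith) _
    _ = k ^ (n ^ 2) * (16 * n ^ 3) ^ (n ^ 2) := by rw [mul_pow, mul_comm]
    _ ≤ (q - 1) * Nat.card H * (16 * n ^ 3) ^ (n ^ 2) := Nat.mul_le_mul_right _ hlower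

theorem closure_pair_eq_top_of_adjoin_eq_top [Nontrivial ι] {x y : Matrix.SpecialLinearGroup ι F}
    (hsep : (x : Matrix ι ι F).charpoly.Separable)
    (hord : Fintype.card F ^ (Fintype.card ι - 1) ≤ 2 * orderOf x)
    (hadj : Algebra.adjoin F {(x : Matrix ι ι F), (y : Matrix ι ι F)} = ⊤)
    (htr : (y : Matrix ι ι F).trace ≠ 0)
    (hq : ((16 * Fintype.card ι ^ 3) ^ (Fintype.card ι ^ 2)).factorial < Fintype.card F) :
    Subgroup.closure {x, y} = ⊤ := by
  have hlarge : 8 * Fintype.card ι ^ 3 ≤ Fintype.card F :=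
    calc 8 * Fintype.card ι ^ 3 ≤ 16 * Fintype.card ι ^ 3 := by omega
      _ ≤ (16 * Fintype.card ι ^ 3) ^ (Fintype.card ι ^ 2) := Nat.le_self_pow (by positivity) _
      _ ≤ _ := (Nat.self_le_factorial _).trans hq.le
  have hindex := index_le_of_adjoin_eq_top
    (Subgroup.subset_closure (Set.mem_insert x {y}))
    (Subgroup.subset_closure (Set.mem_insert_of_mem x rfl)) hsep hord hadj htr hlarge
  refine eq_top_of_factorial_index_lt ?_
  rw [Nat.card_eq_fintype_card]
  exact (Nat.factorial_le hindex).trans_lt hq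

end Generation

section Irreducibility

variable {F V : Type*} [Field F]

theorem isUnit_or_natDegree_eq_one_of_mul_eq {f g p r : Polynomial F} (hf : Irreducible f)
    (hg1 : g.natDegree = 1) (h : p * r = f * g) :
    IsUnit p ∨ IsUnit r ∨ p.natDegree = 1 ∨ r.natDegree = 1 := by
  have hg : Irreducible g := Polynomial.irreducible_of_degree_eq_one
    ((Polynomial.degree_eq_iff_natDegree_eq_of_pos one_pos).mpr hg1)
  wlog hfp : f ∣ p generalizing p r
  · have hfr := (hf.prime.dvd_or_dvd (Dvd.intro _ h.symm)).resolve_left hfp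
    have := this ((mul_comm r p).trans h) hfr
    tauto
  obtain ⟨s, rfl⟩ := hfp
  obtain rfl : s * r = g := mul_left_cancel₀ hf.ne_zero (by rw [← mul_assoc, h])
  rcases hg.isUnit_or_isUnit rfl with hs | hr
  · rw [Polynomial.natDegree_mul (left_ne_zero_of_mul hg.ne_zero)
      (right_ne_zero_of_mul hg.ne_zero), Polynomial.natDegree_eq_zero_of_isUnit hs, zero_add] at hg1
    exact Or.inr (Or.inr (Or.inr hg1))
  · exact Or.inr (Or.inl hr)

variable [AddCommGroup V] [Module F V]

theorem isSimpleModule_adjoin_pair [Nontrivial V] {x y : Module.End F V}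
    (h : ∀ U : Submodule F V, U ≤ U.comap x → U ≤ U.comap y → U = ⊥ ∨ U = ⊤) :
    IsSimpleModule (Algebra.adjoin F {x, y}) V := by
  have hx : x ∈ Algebra.adjoin F {x, y} := Algebra.subset_adjoin (Set.mem_insert x {y})
  have hy : y ∈ Algebra.adjoin F {x, y} := Algebra.subset_adjoin (Set.mem_insert_of_mem x rfl)
  refine isSimpleModule_iff _ _ |>.mpr ⟨fun N ↦ ?_⟩
  simpa using h (N.restrictScalars F) (fun v hv ↦ N.smul_mem ⟨x, hx⟩ hv)
    (fun v hv ↦ N.smul_mem ⟨y, hy⟩ hv)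

variable [Module.Finite F V]

theorem charpoly_eq_charpoly_restrict_mul_charpoly_mapQ (f : Module.End F V) (U : Submodule F V)
    (hU : U ≤ U.comap f) :
    f.charpoly = (f.restrict hU).charpoly * (U.mapQ U f hU).charpoly := by
  let bU := Module.finBasis F U
  let bQ := Module.finBasis F (V ⧸ U)
  let b := bU.sumQuot bQ
  have hlower : (LinearMap.toMatrix b b f).toBlocks₂₁ = 0 := by
    ext j k
    have : Submodule.Quotient.mk (p := U) (f (bU k)) = 0 :=
      (Submodule.Quotient.mk_eq_zero U).mpr (hU (bU k).2)
    simp [Matrix.toBlocks₂₁, LinearMap.toMatrix_apply, b, this]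
  have hupper : (LinearMap.toMatrix b b f).toBlocks₁₁ =
      LinearMap.toMatrix bU bU (f.restrict hU) := by
    ext i k
    simp only [Matrix.toBlocks₁₁, Matrix.of_apply, LinearMap.toMatrix_apply, b,
      Module.Basis.sumQuot_inl]
    apply Module.Basis.sumQuot_repr_inl_of_mem
  have hquot : (LinearMap.toMatrix b b f).toBlocks₂₂ =
      LinearMap.toMatrix bQ bQ (U.mapQ U f hU) := by
    ext j l
    simp only [Matrix.toBlocks₂₂, Matrix.of_apply, LinearMap.toMatrix_apply, b,
      Module.Basis.sumQuot_repr_inr]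
    rw [← Module.Basis.sumQuot_inr bU bQ l, U.mapQ_apply]
    simp
  rw [← LinearMap.charpoly_toMatrix f b, ← LinearMap.charpoly_toMatrix _ bU,
    ← LinearMap.charpoly_toMatrix _ bQ, ← hupper, ← hquot,
    ← Matrix.charpoly_fromBlocks_zero₂₁ _ (LinearMap.toMatrix b b f).toBlocks₁₂, ← hlower,
    Matrix.fromBlocks_toBlocks]

theorem exists_hasEigenvalue_of_finrank_eq_one {f : Module.End F V} {U : Submodule F V}
    (hU : U ≤ U.comap f) (h : Module.finrank F U = 1 ∨ Module.finrank F (V ⧸ U) = 1) :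
    ∃ μ, f.HasEigenvalue μ := by
  simp only [Module.End.hasEigenvalue_iff_isRoot_charpoly,
    charpoly_eq_charpoly_restrict_mul_charpoly_mapQ f U hU, Polynomial.root_mul]
  have hroot {W : Type _} [AddCommGroup W] [Module F W] [Module.Finite F W] (g : Module.End F W)
      (hW : Module.finrank F W = 1) : ∃ μ, g.charpoly.IsRoot μ :=
    Polynomial.exists_root_of_degree_eq_one <| by
      rw [Polynomial.degree_eq_natDegree g.charpoly_monic.ne_zero, g.charpoly_natDegree, hW,
        Nat.cast_one]
  rcases h with h | h
  · exact (hroot _ h).imp fun _ ↦ Or.inl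
  · exact (hroot _ h).imp fun _ ↦ Or.inr

theorem exists_algebraMap_eq_of_finrank_ker_eq_one {A : Subalgebra F (Module.End F V)}
    [IsSimpleModule A V] {z : Module.End F V} (hz : z ∈ A)
    (hker : Module.finrank F (LinearMap.ker z) = 1) (φ : Module.End A V) :
    ∃ c : F, ∀ v, φ v = c • v := by
  obtain ⟨⟨v, hzv⟩, hv, hspan⟩ := finrank_eq_one_iff'.mp hker
  have hφv : z (φ v) = 0 := by
    rw [← map_zero φ, ← LinearMap.mem_ker.mp hzv]
    exact (φ.map_smul (⟨z, hz⟩ : A) v).symm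
  obtain ⟨c, hc⟩ := hspan ⟨φ v, hφv⟩
  have hcv : (φ - algebraMap F _ c) v = 0 := by
    simpa [sub_eq_zero] using (congrArg Subtype.val hc).symm
  have hzero : φ - algebraMap F _ c = 0 := by
    refine (φ - algebraMap F _ c).injective_or_eq_zero.resolve_left fun hinj ↦ hv ?_
    exact Subtype.ext (hinj (hcv.trans (map_zero _).symm))
  exact ⟨c, fun w ↦ by simpa [sub_eq_zero] using LinearMap.congr_fun hzero w⟩

/-- A form of Burnside's theorem: an element with one-dimensional kernel replaces the assumption
that the field is algebraically closed. -/
theorem eq_top_of_finrank_ker_eq_one {A : Subalgebra F (Module.End F V)} [IsSimpleModule A V]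
    {z : Module.End F V} (hz : z ∈ A) (hker : Module.finrank F (LinearMap.ker z) = 1) :
    A = ⊤ := by
  have hscalar := exists_algebraMap_eq_of_finrank_ker_eq_one hz hker
  have : Module.Finite (Module.End A V) V := Module.Finite.of_restrictScalars_finite F _ V
  refine eq_top_iff.mpr fun f _ ↦ ?_
  let f' : Module.End (Module.End A V) V :=
    { f with
      map_smul' := fun φ v ↦ by
        obtain ⟨c, hc⟩ := hscalar φ
        simp [hc] }
  obtain ⟨r, hr⟩ := Module.Finite.toModuleEnd_moduleEnd_surjective (R := A) f'
  convert r.2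
  ext v
  exact (LinearMap.congr_fun hr v).symm

theorem isUnit_charpoly_iff {f : Module.End F V} :
    IsUnit f.charpoly ↔ Subsingleton V := by
  rw [f.charpoly_monic.isUnit_iff, ← f.charpoly_monic.natDegree_eq_zero, f.charpoly_natDegree,
    Module.finrank_zero_iff]

theorem adjoin_pair_eq_top_of_irreducible_charpoly {x y : Module.End F V}
    (hx : Irreducible x.charpoly) {μ : F} (hy : Module.finrank F (y.eigenspace μ) = 1) :
    Algebra.adjoin F {x, y} = ⊤ := by
  have : Nontrivial V :=
    not_subsingleton_iff_nontrivial.mp (isUnit_charpoly_iff.not.mp hx.not_isUnit)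
  have : IsSimpleModule (Algebra.adjoin F {x, y}) V := isSimpleModule_adjoin_pair fun U hUx _ ↦ by
    rw [charpoly_eq_charpoly_restrict_mul_charpoly_mapQ x U hUx] at hx
    rcases hx.isUnit_or_isUnit rfl with hU | hU <;> rw [isUnit_charpoly_iff] at hU
    · exact Or.inl (Submodule.subsingleton_iff_eq_bot.mp hU)
    · exact Or.inr (Submodule.Quotient.subsingleton_iff.mp hU)
  have hyA : y ∈ Algebra.adjoin F {x, y} := Algebra.subset_adjoin (Set.mem_insert_of_mem x rfl)
  rw [Module.End.eigenspace_def] at hy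
  exact eq_top_of_finrank_ker_eq_one (Subalgebra.sub_mem _ hyA (Subalgebra.algebraMap_mem _ μ)) hy

theorem adjoin_pair_eq_top_of_forall_not_hasEigenvalue {x y : Module.End F V} {f : Polynomial F}
    (hf : Irreducible f) {a : F} (hx : x.charpoly = f * (Polynomial.X - Polynomial.C a))
    (ha : ¬ f.IsRoot a) (hy : ∀ μ, ¬ y.HasEigenvalue μ) :
    Algebra.adjoin F {x, y} = ⊤ := by
  have hxa : x.HasEigenvalue a := by simp [Module.End.hasEigenvalue_iff_isRoot_charpoly, hx]
  have hker : Module.finrank F (x.eigenspace a) = 1 := by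
    refine le_antisymm ((x.finrank_eigenspace_le a).trans_eq ?_)
      (Submodule.one_le_finrank_iff.mpr hxa)
    rw [hx, Polynomial.rootMultiplicity_mul (hx ▸ x.charpoly_monic.ne_zero),
      Polynomial.rootMultiplicity_X_sub_C_self, Polynomial.rootMultiplicity_eq_zero ha]
  have : Nontrivial V := hxa.exists_hasEigenvector.elim fun v hv ↦ nontrivial_of_ne v 0 hv.2
  have : IsSimpleModule (Algebra.adjoin F {x, y}) V := by
    refine isSimpleModule_adjoin_pair fun U hUx hUy ↦ ?_
    have hquot (h : Module.finrank F U = 1 ∨ Module.finrank F (V ⧸ U) = 1) : False :=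
      (exists_hasEigenvalue_of_finrank_eq_one hUy h).elim hy
    rw [charpoly_eq_charpoly_restrict_mul_charpoly_mapQ x U hUx] at hx
    rcases isUnit_or_natDegree_eq_one_of_mul_eq hf (Polynomial.natDegree_X_sub_C a) hx
      with hU | hU | hU
    · exact Or.inl (Submodule.subsingleton_iff_eq_bot.mp (isUnit_charpoly_iff.mp hU))
    · exact Or.inr (Submodule.Quotient.subsingleton_iff.mp (isUnit_charpoly_iff.mp hU))
    · simp only [LinearMap.charpoly_natDegree] at hU
      exact (hquot hU).elim
  have hxA : x ∈ Algebra.adjoin F {x, y} := Algebra.subset_adjoin (Set.mem_insert x {y})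
  rw [Module.End.eigenspace_def] at hker
  exact eq_top_of_finrank_ker_eq_one
    (Subalgebra.sub_mem _ hxA (Subalgebra.algebraMap_mem _ a)) hker

end Irreducibility

section InvariableGeneration

theorem invGen_of_forall_closure_conj_eq_top {G : Type*} [Group G] {x y : G}
    (h : ∀ g : G, Subgroup.closure {g * x * g⁻¹, y} = ⊤) : InvGen x y := by
  intro g k
  have hmap := congrArg (Subgroup.map (MulAut.conj k).toMonoidHom) (h (k⁻¹ * g))
  rw [MonoidHom.map_closure, Set.image_pair,
    Subgroup.map_top_of_surjective _ (MulAut.conj k).surjective] at hmap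
  simpa [mul_assoc] using hmap

variable {ι F : Type*} [Fintype ι] [DecidableEq ι] [Field F]

theorem adjoin_pair_eq_top_of_adjoin_toLin'_eq_top {x y : Matrix ι ι F}
    (h : Algebra.adjoin F {(Matrix.toLin' x : Module.End F (ι → F)), Matrix.toLin' y} = ⊤) :
    Algebra.adjoin F {x, y} = ⊤ := by
  have hinj : Function.Injective (Matrix.toLinAlgEquiv' (R := F) (n := ι)).toAlgHom :=
    Matrix.toLinAlgEquiv'.injective
  refine Subalgebra.map_injective hinj ?_
  rw [AlgHom.map_adjoin, Set.image_pair, Algebra.map_top,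
    (AlgHom.range_eq_top _).mpr Matrix.toLinAlgEquiv'.surjective]
  exact h

variable [Fintype F] [Nontrivial ι] {x y : Matrix.SpecialLinearGroup ι F}

theorem invGen_of_forall_adjoin_eq_top (hsep : (x : Matrix ι ι F).charpoly.Separable)
    (hord : Fintype.card F ^ (Fintype.card ι - 1) ≤ 2 * orderOf x)
    (hadj : ∀ z : Module.End F (ι → F), z.charpoly = (x : Matrix ι ι F).charpoly →
      Algebra.adjoin F {z, Matrix.toLin' (y : Matrix ι ι F)} = ⊤)
    (htr : (y : Matrix ι ι F).trace ≠ 0)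
    (hq : ((16 * Fintype.card ι ^ 3) ^ (Fintype.card ι ^ 2)).factorial < Fintype.card F) :
    InvGen x y := by
  refine invGen_of_forall_closure_conj_eq_top fun g ↦ ?_
  have hcharpoly : ((g * x * g⁻¹ : Matrix.SpecialLinearGroup ι F) : Matrix ι ι F).charpoly =
      (x : Matrix ι ι F).charpoly := by
    rw [Matrix.SpecialLinearGroup.coe_mul, Matrix.charpoly_mul_comm,
      ← Matrix.SpecialLinearGroup.coe_mul, inv_mul_cancel_left]
  have horder : orderOf (g * x * g⁻¹) = orderOf x := (MulAut.conj g).orderOf_eq x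
  refine closure_pair_eq_top_of_adjoin_eq_top (hcharpoly ▸ hsep) (horder ▸ hord) ?_ htr hq
  exact adjoin_pair_eq_top_of_adjoin_toLin'_eq_top
    (hadj _ ((Matrix.charpoly_toLin' _).trans hcharpoly))

theorem invGen_of_irreducible_charpoly (hx : Irreducible (x : Matrix ι ι F).charpoly)
    (hord : Fintype.card F ^ (Fintype.card ι - 1) ≤ 2 * orderOf x)
    {μ : F} (hy : Module.finrank F (Module.End.eigenspace (Matrix.toLin' (y : Matrix ι ι F)) μ) = 1)
    (htr : (y : Matrix ι ι F).trace ≠ 0)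
    (hq : ((16 * Fintype.card ι ^ 3) ^ (Fintype.card ι ^ 2)).factorial < Fintype.card F) :
    InvGen x y :=
  invGen_of_forall_adjoin_eq_top (PerfectField.separable_of_irreducible hx) hord
    (fun _ hz ↦ adjoin_pair_eq_top_of_irreducible_charpoly (hz ▸ hx) hy) htr hq

theorem invGen_of_forall_not_hasEigenvalue {f : Polynomial F} (hf : Irreducible f) {a : F}
    (hx : (x : Matrix ι ι F).charpoly = f * (Polynomial.X - Polynomial.C a)) (ha : ¬ f.IsRoot a)
    (hord : Fintype.card F ^ (Fintype.card ι - 1) ≤ 2 * orderOf x)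
    (hy : ∀ μ : F, ¬ Module.End.HasEigenvalue (Matrix.toLin' (y : Matrix ι ι F)) μ)
    (htr : (y : Matrix ι ι F).trace ≠ 0)
    (hq : ((16 * Fintype.card ι ^ 3) ^ (Fintype.card ι ^ 2)).factorial < Fintype.card F) :
    InvGen x y := by
  have hcoprime : IsCoprime f (Polynomial.X - Polynomial.C a) := by
    rwa [isCoprime_comm, (Polynomial.irreducible_X_sub_C a).coprime_iff_not_dvd,
      Polynomial.dvd_iff_isRoot]
  have hsep : (x : Matrix ι ι F).charpoly.Separable :=
    hx ▸ (PerfectField.separable_of_irreducible hf).mul Polynomial.separable_X_sub_C hcoprime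
  exact invGen_of_forall_adjoin_eq_top hsep hord
    (fun _ hz ↦ adjoin_pair_eq_top_of_forall_not_hasEigenvalue hf (hz.trans hx) ha hy) htr hq

end InvariableGeneration

section SingerCycles

theorem pow_le_pow_succ_sub_one_div {q : ℕ} (hq : 2 ≤ q) (m : ℕ) :
    q ^ m ≤ (q ^ (m + 1) - 1) / (q - 1) := by
  rw [← Nat.geomSum_eq hq]
  exact Finset.single_le_sum (f := fun k ↦ q ^ k) (fun _ _ ↦ Nat.zero_le _)
    (Finset.self_mem_range_succ m)

theorem exists_ne_zero_orderOf_eq_natCard_sub_one (E : Type*) [Field E] [Finite E] :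
    ∃ w : E, w ≠ 0 ∧ orderOf w = Nat.card E - 1 := by
  obtain ⟨w, hw⟩ := IsCyclic.exists_generator (α := Eˣ)
  refine ⟨w, w.ne_zero, ?_⟩
  rw [orderOf_units, orderOf_eq_card_of_forall_mem_zpowers hw, Nat.card_units]

theorem orderOf_coe_specialLinearGroup {ι R : Type*} [Fintype ι] [DecidableEq ι] [CommRing R]
    (x : Matrix.SpecialLinearGroup ι R) : orderOf (x : Matrix ι ι R) = orderOf x := by
  let coe : Matrix.SpecialLinearGroup ι R →* Matrix ι ι R :=
    { toFun := Subtype.val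
      map_one' := Matrix.SpecialLinearGroup.coe_one
      map_mul' := Matrix.SpecialLinearGroup.coe_mul }
  exact orderOf_injective coe Subtype.val_injective x

variable {F : Type*} [Field F]

section Extension

variable {E : Type*} [Field E] [Algebra F E] [FiniteDimensional F E]

theorem charpoly_leftMulMatrix_eq_minpoly {κ : Type*} [Fintype κ] [DecidableEq κ]
    (b : Module.Basis κ F E) {s : E} (hs : (minpoly F s).natDegree = Module.finrank F E) :
    (Algebra.leftMulMatrix b s).charpoly = minpoly F s := by
  refine Polynomial.eq_of_monic_of_dvd_of_natDegree_le (minpoly.monic (IsIntegral.of_finite F s))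
    (Matrix.charpoly_monic _) (minpoly.dvd _ _ ?_) ?_
  · apply Algebra.leftMulMatrix_injective b
    rw [← Polynomial.aeval_algHom_apply, map_zero]
    exact Matrix.aeval_self_charpoly _
  · rw [hs, Matrix.charpoly_natDegree_eq_dim, Module.finrank_eq_card_basis b]

theorem not_isRoot_minpoly_inv_norm {w : E}
    (hdeg : (minpoly F w).natDegree = Module.finrank F E) (hw : 2 < orderOf w) :
    ¬ (minpoly F w).IsRoot (Algebra.norm F w)⁻¹ := by
  intro hroot
  have hone : (minpoly F w).natDegree = 1 := Polynomial.natDegree_eq_of_degree_eq_some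
    (Polynomial.degree_eq_one_of_irreducible_of_root
      (minpoly.irreducible (IsIntegral.of_finite F w)) hroot)
  obtain ⟨a, rfl⟩ := minpoly.natDegree_eq_one_iff.mp hone
  rw [minpoly.eq_X_sub_C, Polynomial.root_X_sub_C, Algebra.norm_algebraMap, ← hdeg, hone,
    pow_one] at hroot
  have ha : a ≠ 0 := by
    rintro rfl
    simp at hw
  have hsq : algebraMap F E a ^ 2 = 1 := by
    rw [← map_pow, sq]
    nth_rw 1 [hroot]
    rw [inv_mul_cancel₀ ha, map_one]
  exact hw.not_ge (orderOf_le_of_pow_eq_one two_pos hsq)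

variable [Fintype F]

theorem pow_card_pow_natDegree_minpoly (s : E) :
    s ^ Fintype.card F ^ (minpoly F s).natDegree = s := by
  let K := IntermediateField.adjoin F {s}
  have : Finite K := Module.finite_of_finite F
  have := Fintype.ofFinite K
  have hcard : Fintype.card K = Fintype.card F ^ (minpoly F s).natDegree := by
    rw [Module.card_eq_pow_finrank (K := F),
      IntermediateField.adjoin.finrank (IsIntegral.of_finite F s)]
  have hgen := FiniteField.pow_card (IntermediateField.AdjoinSimple.gen F s)
  rw [hcard] at hgen
  exact congrArg (algebraMap K E) hgen

theorem natDegree_minpoly_eq_finrank {s : E}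
    (hs : Fintype.card F ^ (Module.finrank F E - 1) ≤ orderOf s) :
    (minpoly F s).natDegree = Module.finrank F E := by
  set d := (minpoly F s).natDegree
  have hq : 1 < Fintype.card F := Fintype.one_lt_card
  have hd : 0 < d := minpoly.natDegree_pos (IsIntegral.of_finite F s)
  have hqd : 1 < Fintype.card F ^ d := Nat.one_lt_pow hd.ne' hq
  have hs0 : s ≠ 0 := by
    rintro rfl
    simp at hs
  have hpow : s ^ (Fintype.card F ^ d - 1) = 1 := by
    rw [pow_sub₀ s hs0 hqd.le, pow_card_pow_natDegree_minpoly, pow_one, mul_inv_cancel₀ hs0]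
  have hlt : Fintype.card F ^ (Module.finrank F E - 1) < Fintype.card F ^ d :=
    calc Fintype.card F ^ (Module.finrank F E - 1) ≤ orderOf s := hs
      _ ≤ Fintype.card F ^ d - 1 := orderOf_le_of_pow_eq_one (by omega) hpow
      _ < Fintype.card F ^ d := by omega
  have hle : d ≤ Module.finrank F E := minpoly.natDegree_le s
  have := (Nat.pow_lt_pow_iff_right hq).mp hlt
  omega

end Extension

/-- The homomorphism `a ↦ diag(a, N(a)⁻¹)`, where `a` acts on `E` by multiplication and `N` is the
norm. It maps `Eˣ` to matrices of determinant one. -/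
noncomputable def leftMulNormInv {E κ : Type*} [Field E] [Algebra F E] [Fintype κ] [DecidableEq κ]
    (b : Module.Basis κ F E) : E →* Matrix (κ ⊕ Unit) (κ ⊕ Unit) F where
  toFun a := Matrix.fromBlocks (Algebra.leftMulMatrix b a) 0 0
    (Matrix.diagonal fun _ ↦ (Algebra.norm F a)⁻¹)
  map_one' := by simp
  map_mul' a a' := by simp [Matrix.fromBlocks_multiply, mul_comm]

section LeftMulNormInv

variable {E κ : Type*} [Field E] [Algebra F E] [Fintype κ] [DecidableEq κ]
  (b : Module.Basis κ F E)

theorem leftMulNormInv_injective : Function.Injective (leftMulNormInv b) := fun _ _ h ↦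
  Algebra.leftMulMatrix_injective b (Matrix.fromBlocks_inj.mp h).1

theorem det_leftMulNormInv {a : E} (ha : a ≠ 0) : (leftMulNormInv b a).det = 1 := by
  have : FiniteDimensional F E := b.finiteDimensional_of_finite
  have hnorm : Algebra.norm F a ≠ 0 := Algebra.norm_ne_zero_iff.mpr ha
  change (Matrix.fromBlocks _ _ _ _).det = 1
  rw [Matrix.det_fromBlocks_zero₁₂, ← Algebra.norm_eq_matrix_det]
  simp [hnorm]

theorem charpoly_leftMulNormInv (a : E) :
    (leftMulNormInv b a).charpoly = (Algebra.leftMulMatrix b a).charpoly *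
      (Polynomial.X - Polynomial.C (Algebra.norm F a)⁻¹) := by
  change (Matrix.fromBlocks _ _ _ _).charpoly = _
  rw [Matrix.charpoly_fromBlocks_zero₁₂]
  simp [Matrix.charpoly, Matrix.charmatrix]

end LeftMulNormInv

theorem exists_basis_finite_extension (F κ : Type*) [Field F] [Finite F] [Finite κ]
    [Nonempty κ] :
    ∃ (E : Type) (_ : Field E) (_ : Finite E) (_ : Algebra F E), Nonempty (Module.Basis κ F E) := by
  have := Fintype.ofFinite κ
  obtain ⟨p, _⟩ := CharP.exists F
  have : Fact p.Prime := ⟨CharP.char_is_prime F p⟩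
  exact ⟨FiniteField.Extension F p (Fintype.card κ), inferInstance, inferInstance, inferInstance,
    ⟨(Module.finBasisOfFinrankEq F _ (FiniteField.finrank_extension F p _)).reindex
      (Fintype.equivFin κ).symm⟩⟩

variable (ι : Type*) (F) [Fintype ι] [DecidableEq ι] [Fintype F]

theorem exists_orderOf_eq_and_irreducible_charpoly [Nonempty ι] :
    ∃ x : Matrix.SpecialLinearGroup ι F,
      orderOf x = (Fintype.card F ^ Fintype.card ι - 1) / (Fintype.card F - 1) ∧
      Irreducible (x : Matrix ι ι F).charpoly := by
  obtain ⟨E, _, _, _, ⟨b⟩⟩ := exists_basis_finite_extension F ι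
  have : FiniteDimensional F E := b.finiteDimensional_of_finite
  have hfinrank : Module.finrank F E = Fintype.card ι := Module.finrank_eq_card_basis b
  obtain ⟨w, hw0, hw⟩ := exists_ne_zero_orderOf_eq_natCard_sub_one E
  rw [Module.natCard_eq_pow_finrank (K := F), hfinrank, Nat.card_eq_fintype_card] at hw
  have hq : 2 ≤ Fintype.card F := Fintype.one_lt_card
  have hι : Fintype.card ι - 1 + 1 = Fintype.card ι := Nat.sub_add_cancel Fintype.card_pos
  set s := w ^ (Fintype.card F - 1)
  have hs : orderOf s = (Fintype.card F ^ Fintype.card ι - 1) / (Fintype.card F - 1) := by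
    rw [orderOf_pow_of_dvd (by omega)
      (by simpa [hw] using Nat.sub_dvd_pow_sub_pow (Fintype.card F) 1 (Fintype.card ι)), hw]
  have hdeg : (minpoly F s).natDegree = Module.finrank F E := by
    refine natDegree_minpoly_eq_finrank ?_
    have := pow_le_pow_succ_sub_one_div hq (Fintype.card ι - 1)
    rwa [hfinrank, hs, ← hι, Nat.add_sub_cancel]
  have hdet : (Algebra.leftMulMatrix b s).det = 1 := by
    rw [← Algebra.norm_eq_matrix_det, map_pow]
    exact FiniteField.pow_card_sub_one_eq_one _ (Algebra.norm_ne_zero_iff.mpr hw0)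
  obtain ⟨x, hx⟩ : ∃ x : Matrix.SpecialLinearGroup ι F, ↑x = Algebra.leftMulMatrix b s :=
    ⟨⟨_, hdet⟩, rfl⟩
  refine ⟨x, ?_, ?_⟩
  · rw [← orderOf_coe_specialLinearGroup, ← hs, hx]
    exact orderOf_injective (Algebra.leftMulMatrix b).toMonoidHom
      (Algebra.leftMulMatrix_injective b) s
  · rw [hx, charpoly_leftMulMatrix_eq_minpoly b hdeg]
    exact minpoly.irreducible (IsIntegral.of_finite F s)

theorem exists_orderOf_eq_and_charpoly_eq_mul [Nontrivial ι] :
    ∃ x : Matrix.SpecialLinearGroup ι F,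
      orderOf x = Fintype.card F ^ (Fintype.card ι - 1) - 1 ∧
      (3 < Fintype.card F → ∃ (f : Polynomial F) (a : F), Irreducible f ∧
        (x : Matrix ι ι F).charpoly = f * (Polynomial.X - Polynomial.C a) ∧ ¬ f.IsRoot a) := by
  have hι : Fintype.card ι - 1 + 1 = Fintype.card ι := Nat.sub_add_cancel Fintype.card_pos
  have hι2 : 1 < Fintype.card ι := Fintype.one_lt_card
  have : Nonempty (Fin (Fintype.card ι - 1)) := ⟨⟨0, by omega⟩⟩
  let e : Fin (Fintype.card ι - 1) ⊕ Unit ≃ ι := Fintype.equivOfCardEq (by simpa using hι)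
  obtain ⟨E, _, _, _, ⟨b⟩⟩ := exists_basis_finite_extension F (Fin (Fintype.card ι - 1))
  have : FiniteDimensional F E := b.finiteDimensional_of_finite
  have hfinrank : Module.finrank F E = Fintype.card ι - 1 := by
    rw [Module.finrank_eq_card_basis b, Fintype.card_fin]
  obtain ⟨w, hw0, hw⟩ := exists_ne_zero_orderOf_eq_natCard_sub_one E
  rw [Module.natCard_eq_pow_finrank (K := F), hfinrank, Nat.card_eq_fintype_card] at hw
  have hpow : Fintype.card F ^ (Fintype.card ι - 1 - 1) < Fintype.card F ^ (Fintype.card ι - 1) :=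
    Nat.pow_lt_pow_right Fintype.one_lt_card (by omega)
  have hdeg : (minpoly F w).natDegree = Module.finrank F E :=
    natDegree_minpoly_eq_finrank (by rw [hw, hfinrank]; omega)
  have hdet : (Matrix.reindexAlgEquiv F F e (leftMulNormInv b w)).det = 1 := by
    rw [Matrix.det_reindexAlgEquiv, det_leftMulNormInv b hw0]
  obtain ⟨x, hx⟩ : ∃ x : Matrix.SpecialLinearGroup ι F,
      ↑x = Matrix.reindexAlgEquiv F F e (leftMulNormInv b w) := ⟨⟨_, hdet⟩, rfl⟩
  refine ⟨x, ?_, fun hq ↦ ⟨minpoly F w, (Algebra.norm F w)⁻¹,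
    minpoly.irreducible (IsIntegral.of_finite F w), ?_, not_isRoot_minpoly_inv_norm hdeg ?_⟩⟩
  · rw [← orderOf_coe_specialLinearGroup, ← hw, hx,
      ← orderOf_injective _ (leftMulNormInv_injective b)]
    exact (Matrix.reindexAlgEquiv F F e).toMulEquiv.orderOf_eq _
  · rw [hx, Matrix.coe_reindexAlgEquiv, Matrix.charpoly_reindex, charpoly_leftMulNormInv,
      charpoly_leftMulMatrix_eq_minpoly b hdeg]
  · have := Nat.le_self_pow (n := Fintype.card ι - 1) (by omega) (Fintype.card F)
    omega

end SingerCycles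

section Counting

section Transvections

variable {F : Type*} [Field F] [Fintype F]

theorem card_mul_ncard_eq_zero_and_ne_zero_le {G : Type*} [Group G] [Finite G] (T : F → G)
    (φ ψ : G → F) (hφ : ∀ t y, φ (T t * y) = φ y + t * ψ y) (hψ : ∀ t y, ψ (T t * y) = ψ y) :
    Fintype.card F * {y : G | φ y = 0 ∧ ψ y ≠ 0}.ncard ≤ Nat.card G := by
  have hinj : Function.Injective fun p : F × {y : G | φ y = 0 ∧ ψ y ≠ 0} ↦ T p.1 * p.2.1 := by
    rintro ⟨t, y, hy, hyψ⟩ ⟨s, z, hz, hzψ⟩ h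
    have hψyz := congrArg ψ h
    have hts := congrArg φ h
    simp only [hφ, hψ, hy, hz, zero_add] at hψyz hts
    obtain rfl : t = s := mul_right_cancel₀ hyψ (hts.trans (by rw [hψyz]))
    obtain rfl : y = z := mul_left_cancel h
    rfl
  have hcard := Nat.card_le_card_of_injective _ hinj
  rwa [Nat.card_prod, Nat.card_eq_fintype_card, Nat.card_coe_set_eq] at hcard

variable {ι : Type*} [Fintype ι] [DecidableEq ι] {i j : ι}

theorem coe_transvection_mul_apply {R : Type*} [CommRing R] (hij : i ≠ j) (t : R)
    (y : Matrix.SpecialLinearGroup ι R) (a b : ι) :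
    (Matrix.SpecialLinearGroup.transvection hij t * y : Matrix.SpecialLinearGroup ι R) a b =
      y a b + if a = i then t * y j b else 0 := by
  rw [Matrix.SpecialLinearGroup.coe_mul]
  change (Matrix.transvection i j t * (y : Matrix ι ι R)) a b = _
  split_ifs with h
  · rw [h, Matrix.transvection_mul_apply_same]
  · rw [Matrix.transvection_mul_apply_of_ne _ _ _ _ h, add_zero]

theorem card_mul_ncard_apply_eq_zero_le (i j : ι) :
    Fintype.card F * {y : Matrix.SpecialLinearGroup ι F | y j i = 0}.ncard ≤
      Fintype.card ι * Nat.card (Matrix.SpecialLinearGroup ι F) := by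
  let S (k : ι) : Set (Matrix.SpecialLinearGroup ι F) := {y | y j i = 0 ∧ y k i ≠ 0}
  have hS (k : ι) : Fintype.card F * (S k).ncard ≤
      Nat.card (Matrix.SpecialLinearGroup ι F) := by
    by_cases hjk : j = k
    · have : S k = ∅ := by
        ext y
        simp [S, hjk]
      simp [this]
    · exact card_mul_ncard_eq_zero_and_ne_zero_le (Matrix.SpecialLinearGroup.transvection hjk) _ _
        (by simp [coe_transvection_mul_apply]) (by simp [coe_transvection_mul_apply, Ne.symm hjk])
  have hcover : {y : Matrix.SpecialLinearGroup ι F | y j i = 0} ⊆ ⋃ k, S k := fun y hy ↦ by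
    obtain ⟨k, hk⟩ : ∃ k, y k i ≠ 0 := by
      by_contra! hcol
      exact one_ne_zero (y.det_coe.symm.trans (Matrix.det_eq_zero_of_column_eq_zero i hcol))
    exact Set.mem_iUnion.mpr ⟨k, hy, hk⟩
  calc Fintype.card F * {y : Matrix.SpecialLinearGroup ι F | y j i = 0}.ncard
      ≤ Fintype.card F * ∑ k, (S k).ncard := Nat.mul_le_mul_left _
        ((Set.ncard_le_ncard hcover).trans (Set.ncard_iUnion_le_of_fintype S))
    _ ≤ Fintype.card ι * Nat.card (Matrix.SpecialLinearGroup ι F) := by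
        rw [Finset.mul_sum]
        exact Finset.sum_le_card_nsmul _ _ _ fun k _ ↦ hS k

theorem card_mul_ncard_trace_eq_zero_le [Nontrivial ι] :
    Fintype.card F * {y : Matrix.SpecialLinearGroup ι F | (y : Matrix ι ι F).trace = 0}.ncard ≤
      (Fintype.card ι + 1) * Nat.card (Matrix.SpecialLinearGroup ι F) := by
  obtain ⟨i, j, hij⟩ := exists_pair_ne ι
  have hne : Fintype.card F * {y : Matrix.SpecialLinearGroup ι F |
      (y : Matrix ι ι F).trace = 0 ∧ y j i ≠ 0}.ncard ≤
      Nat.card (Matrix.SpecialLinearGroup ι F) :=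
    card_mul_ncard_eq_zero_and_ne_zero_le (Matrix.SpecialLinearGroup.transvection hij) _ _
      (by simp [Matrix.trace, coe_transvection_mul_apply, Finset.sum_add_distrib,
        -Matrix.SpecialLinearGroup.coe_mul])
      (by simp [coe_transvection_mul_apply, hij.symm])
  have hcover : {y : Matrix.SpecialLinearGroup ι F | (y : Matrix ι ι F).trace = 0} ⊆
      {y | y j i = 0} ∪ {y | (y : Matrix ι ι F).trace = 0 ∧ y j i ≠ 0} := fun y hy ↦ by
    by_cases h : y j i = 0
    · exact Or.inl h
    · exact Or.inr ⟨hy, h⟩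
  calc _ ≤ Fintype.card F * _ := Nat.mul_le_mul_left _
        ((Set.ncard_le_ncard hcover).trans (Set.ncard_union_le _ _))
    _ ≤ _ := by
        rw [mul_add, add_mul, one_mul]
        exact add_le_add (card_mul_ncard_apply_eq_zero_le i j) hne

end Transvections

section Nullity

variable {F V W : Type*} [Field F] [AddCommGroup V] [Module F V] [AddCommGroup W] [Module F W]

theorem exists_linearMap_apply_eq {κ : Type*} {s : κ → V} (hs : LinearIndependent F s)
    (w : κ → W) : ∃ f : V →ₗ[F] W, ∀ k, f (s k) = w k := by
  obtain ⟨f, hf⟩ := ((Module.Basis.span hs).constr F w).exists_extend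
  refine ⟨f, fun k ↦ ?_⟩
  have := LinearMap.congr_fun hf (Module.Basis.span hs k)
  rwa [Module.Basis.constr_basis, LinearMap.comp_apply, Submodule.subtype_apply,
    Module.Basis.span_apply] at this

variable [Fintype F] [Module.Finite F V]

theorem prod_le_natCard_linearIndependent_ker {k : ℕ} {f : V →ₗ[F] W}
    (hf : k ≤ Module.finrank F (LinearMap.ker f)) :
    ∏ i : Fin k, (Fintype.card F ^ k - Fintype.card F ^ (i : ℕ)) ≤
      Nat.card {s : Fin k → V // LinearIndependent F s ∧ ∀ i, f (s i) = 0} := by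
  have : Finite V := Module.finite_of_finite F
  calc ∏ i : Fin k, (Fintype.card F ^ k - Fintype.card F ^ (i : ℕ))
      ≤ ∏ i : Fin k, (Fintype.card F ^ Module.finrank F (LinearMap.ker f) -
          Fintype.card F ^ (i : ℕ)) := by
        gcongr
        exact Fintype.card_pos
    _ = Nat.card {s : Fin k → LinearMap.ker f // LinearIndependent F s} :=
        (card_linearIndependent hf).symm
    _ ≤ Nat.card {s : Fin k → V // LinearIndependent F s ∧ ∀ i, f (s i) = 0} := by
        refine Nat.card_le_card_of_injective
          (fun s ↦ ⟨fun i ↦ s.1 i, s.2.map' _ (Submodule.ker_subtype _), fun i ↦ (s.1 i).2⟩) ?_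
        intro s t hst
        ext i
        exact congrFun (congrArg Subtype.val hst) i

variable [Module.Finite F W]

theorem natCard_linearMap_forall_apply_eq_zero {k : ℕ} {s : Fin k → V}
    (hs : LinearIndependent F s) :
    Nat.card {f : V →ₗ[F] W // ∀ i, f (s i) = 0} =
      Fintype.card F ^ ((Module.finrank F V - k) * Module.finrank F W) := by
  let ev : (V →ₗ[F] W) →ₗ[F] (Fin k → W) := LinearMap.pi fun i ↦ LinearMap.applyₗ (s i)
  have hev : LinearMap.range ev = ⊤ := LinearMap.range_eq_top.mpr fun w ↦
    (exists_linearMap_apply_eq hs w).imp fun f hf ↦ funext hf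
  have hker : Nat.card {f : V →ₗ[F] W // ∀ i, f (s i) = 0} = Nat.card (LinearMap.ker ev) :=
    Nat.card_congr (Equiv.subtypeEquivRight fun f ↦ by simp [ev, funext_iff])
  have hdim := ev.finrank_range_add_finrank_ker
  rw [hev, finrank_top, Module.finrank_pi_fintype, Finset.sum_const, Finset.card_fin, smul_eq_mul,
    Module.finrank_linearMap] at hdim
  rw [hker, Module.natCard_eq_pow_finrank (K := F), Nat.card_eq_fintype_card, Nat.sub_mul, ← hdim,
    Nat.add_sub_cancel_left]

theorem natCard_le_finrank_ker_mul_le (k : ℕ) :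
    Nat.card {f : V →ₗ[F] W // k ≤ Module.finrank F (LinearMap.ker f)} *
        ∏ i : Fin k, (Fintype.card F ^ k - Fintype.card F ^ (i : ℕ)) ≤
      Fintype.card F ^ (k * Module.finrank F V) *
        Fintype.card F ^ ((Module.finrank F V - k) * Module.finrank F W) := by
  classical
  have : Finite V := Module.finite_of_finite F
  have : Finite (V →ₗ[F] W) := Module.finite_of_finite F
  have := Fintype.ofFinite V
  have := Fintype.ofFinite (V →ₗ[F] W)
  let A : Finset (V →ₗ[F] W) := {f | k ≤ Module.finrank F (LinearMap.ker f)}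
  let B : Finset (Fin k → V) := {s | LinearIndependent F s}
  have hcount := Finset.card_mul_le_card_mul (fun f s ↦ ∀ i, f (s i) = 0) (s := A) (t := B)
    (m := ∏ i : Fin k, (Fintype.card F ^ k - Fintype.card F ^ (i : ℕ)))
    (n := Fintype.card F ^ ((Module.finrank F V - k) * Module.finrank F W))
    (fun f hf ↦ by
      refine (prod_le_natCard_linearIndependent_ker (Finset.mem_filter.mp hf).2).trans_eq ?_
      rw [Nat.card_eq_fintype_card, Fintype.card_subtype, Finset.bipartiteAbove,
        Finset.filter_filter])
    (fun s hs ↦ by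
      rw [← natCard_linearMap_forall_apply_eq_zero (Finset.mem_filter.mp hs).2,
        Nat.card_eq_fintype_card, Fintype.card_subtype]
      exact Finset.card_le_card (Finset.filter_subset_filter _ (Finset.subset_univ A)))
  rw [Nat.card_eq_fintype_card, Fintype.card_subtype]
  refine hcount.trans (Nat.mul_le_mul_right _ ?_)
  refine (Finset.card_le_univ B).trans_eq ?_
  rw [Fintype.card_fun, Fintype.card_fin, Module.card_eq_pow_finrank (K := F), ← pow_mul,
    mul_comm]

end Nullity

section Derogatory

variable {ι F : Type*} [Fintype ι] [Field F] [Fintype F]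

theorem natCard_two_le_finrank_ker_mul_le [Nontrivial ι] :
    Nat.card {f : Module.End F (ι → F) // 2 ≤ Module.finrank F (LinearMap.ker f)} *
      Fintype.card F ^ 4 ≤ 4 * Fintype.card F ^ (Fintype.card ι ^ 2) := by
  have hcount := natCard_le_finrank_ker_mul_le (F := F) (V := ι → F) (W := ι → F) 2
  obtain ⟨m, hm⟩ := Nat.exists_eq_add_of_le' (Fintype.one_lt_card (α := ι))
  rw [Module.finrank_fintype_fun_eq_card, ← pow_add, ← add_mul, hm, Nat.add_sub_cancel,
    add_comm 2, ← sq, Fin.prod_univ_two] at hcount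
  have hq : 2 ≤ Fintype.card F := Fintype.one_lt_card
  rw [hm]
  set q := Fintype.card F
  have hprod : q ^ 4 ≤ 4 * ((q ^ 2 - 1) * (q ^ 2 - q)) := by
    have h2q : 2 * q ≤ q ^ 2 := by nlinarith
    calc q ^ 4 = q ^ 2 * q ^ 2 := by ring
      _ ≤ (2 * (q ^ 2 - 1)) * (2 * (q ^ 2 - q)) := Nat.mul_le_mul (by omega) (by omega)
      _ = 4 * ((q ^ 2 - 1) * (q ^ 2 - q)) := by ring
  calc _ ≤ _ * (4 * ((q ^ 2 - 1) * (q ^ 2 - q))) := Nat.mul_le_mul_left _ hprod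
    _ = 4 * (_ * ((q ^ 2 - 1) * (q ^ 2 - q))) := by ring
    _ ≤ 4 * q ^ ((m + 2) ^ 2) := Nat.mul_le_mul_left 4 (by simpa using hcount)

variable [DecidableEq ι]

theorem card_mul_ncard_two_le_finrank_eigenspace_le [Nontrivial ι] :
    Fintype.card F * {y : Matrix.SpecialLinearGroup ι F | ∃ μ, 2 ≤ Module.finrank F
        (Module.End.eigenspace (Matrix.toLin' (y : Matrix ι ι F)) μ)}.ncard ≤
      2 ^ (Fintype.card ι + 2) * Nat.card (Matrix.SpecialLinearGroup ι F) := by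
  let S (μ : F) : Set (Matrix.SpecialLinearGroup ι F) :=
    {y | 2 ≤ Module.finrank F (Module.End.eigenspace (Matrix.toLin' (y : Matrix ι ι F)) μ)}
  let K := {f : Module.End F (ι → F) // 2 ≤ Module.finrank F (LinearMap.ker f)}
  have : Finite (Module.End F (ι → F)) := Module.finite_of_finite F
  have hS (μ : F) : (S μ).ncard ≤ Nat.card K := by
    refine Nat.card_le_card_of_injective (fun y : S μ ↦ (⟨Matrix.toLin' (y.1 : Matrix ι ι F) -
      algebraMap F _ μ, by
        have hy : 2 ≤ _ := y.2
        rwa [Module.End.eigenspace_def] at hy⟩ : K)) ?_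
    intro y z hyz
    exact Subtype.ext (Subtype.ext (Matrix.toLin'.injective
      (sub_left_injective (congrArg Subtype.val hyz))))
  have hunion : {y : Matrix.SpecialLinearGroup ι F | ∃ μ, 2 ≤ Module.finrank F
      (Module.End.eigenspace (Matrix.toLin' (y : Matrix ι ι F)) μ)} = ⋃ μ, S μ := by
    ext y
    simp [S]
  have hsum : (⋃ μ, S μ).ncard ≤ Fintype.card F * Nat.card K :=
    (Set.ncard_iUnion_le_of_fintype S).trans (Finset.sum_le_card_nsmul _ _ _ fun μ _ ↦ hS μ)
  have hK := natCard_two_le_finrank_ker_mul_le (F := F) (ι := ι)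
  have hSL := pow_card_sq_le_two_pow_mul_card_SL (F := F) (ι := ι)
  have hq : 0 < Fintype.card F := Fintype.card_pos
  rw [hunion]
  set q := Fintype.card F
  set N := Nat.card (Matrix.SpecialLinearGroup ι F)
  refine le_of_mul_le_mul_left ?_ (pow_pos hq 2)
  calc q ^ 2 * (q * (⋃ μ, S μ).ncard) ≤ q ^ 2 * (q * (q * Nat.card K)) := by gcongr
    _ = Nat.card K * q ^ 4 := by ring
    _ ≤ 4 * (2 ^ Fintype.card ι * ((q - 1) * N)) := hK.trans (Nat.mul_le_mul_left 4 hSL)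
    _ ≤ 4 * (2 ^ Fintype.card ι * (q ^ 2 * N)) := by
        gcongr
        exact (Nat.sub_le q 1).trans (Nat.le_self_pow two_ne_zero q)
    _ = q ^ 2 * (2 ^ (Fintype.card ι + 2) * N) := by ring

end Derogatory

end Counting

section ProportionOfGenerators

theorem one_sub_div_mul_le {K : Type*} [Field K] [LinearOrder K] [IsStrictOrderedRing K]
    {q C N g : K} (hq : 0 < q) (h : q * N ≤ q * g + C * N) : (1 - C / q) * N ≤ g := by
  refine le_of_mul_le_mul_left ?_ hq
  rw [← mul_assoc, mul_sub, mul_div_cancel₀ _ hq.ne', mul_one, sub_mul]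
  exact sub_le_iff_le_add.mpr h

variable (F ι : Type*) [Field F] [Fintype F] [Fintype ι] [DecidableEq ι] [Nontrivial ι]

theorem card_mul_natCard_SL_le_ncard_trace_ne_zero_finrank_eigenspace_le_one_add :
    Fintype.card F * Nat.card (Matrix.SpecialLinearGroup ι F) ≤
      Fintype.card F * {y : Matrix.SpecialLinearGroup ι F | (y : Matrix ι ι F).trace ≠ 0 ∧
        ∀ μ, Module.finrank F
          (Module.End.eigenspace (Matrix.toLin' (y : Matrix ι ι F)) μ) ≤ 1}.ncard +
      (Fintype.card ι + 1 + 2 ^ (Fintype.card ι + 2)) *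
        Nat.card (Matrix.SpecialLinearGroup ι F) := by
  set R : Set (Matrix.SpecialLinearGroup ι F) := {y | (y : Matrix ι ι F).trace ≠ 0 ∧
    ∀ μ, Module.finrank F (Module.End.eigenspace (Matrix.toLin' (y : Matrix ι ι F)) μ) ≤ 1}
  let T : Set (Matrix.SpecialLinearGroup ι F) := {y | (y : Matrix ι ι F).trace = 0}
  let D : Set (Matrix.SpecialLinearGroup ι F) := {y | ∃ μ,
    2 ≤ Module.finrank F (Module.End.eigenspace (Matrix.toLin' (y : Matrix ι ι F)) μ)}
  have hcompl : Rᶜ ⊆ T ∪ D := fun y hy ↦ by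
    by_contra! hTD
    simp only [T, D, Set.mem_union, Set.mem_ofPred_eq, not_or, not_exists, not_le] at hTD
    exact hy ⟨hTD.1, fun μ ↦ Nat.le_of_lt_succ (hTD.2 μ)⟩
  have hcard : Rᶜ.ncard ≤ T.ncard + D.ncard :=
    (Set.ncard_le_ncard hcompl).trans (Set.ncard_union_le T D)
  rw [add_mul (Fintype.card ι + 1), ← Set.ncard_add_ncard_compl R, mul_add,
    Set.ncard_add_ncard_compl R]
  refine Nat.add_le_add_left ((Nat.mul_le_mul_left _ hcard).trans ?_) _
  rw [mul_add]
  exact add_le_add card_mul_ncard_trace_eq_zero_le card_mul_ncard_two_le_finrank_eigenspace_le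

theorem exists_forall_invGen_or_invGen :
    ∃ x₁ x₂ : Matrix.SpecialLinearGroup ι F,
      orderOf x₁ = (Fintype.card F ^ Fintype.card ι - 1) / (Fintype.card F - 1) ∧
      orderOf x₂ = Fintype.card F ^ (Fintype.card ι - 1) - 1 ∧
      (((16 * Fintype.card ι ^ 3) ^ (Fintype.card ι ^ 2)).factorial < Fintype.card F →
        ∀ y : Matrix.SpecialLinearGroup ι F, (y : Matrix ι ι F).trace ≠ 0 →
          (∀ μ, Module.finrank F
            (Module.End.eigenspace (Matrix.toLin' (y : Matrix ι ι F)) μ) ≤ 1) →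
          InvGen x₁ y ∨ InvGen x₂ y) := by
  obtain ⟨x₁, hord₁, hirr⟩ := exists_orderOf_eq_and_irreducible_charpoly F ι
  obtain ⟨x₂, hord₂, hx₂⟩ := exists_orderOf_eq_and_charpoly_eq_mul F ι
  refine ⟨x₁, x₂, hord₁, hord₂, fun hq y htr hy ↦ ?_⟩
  have hq₂ : 2 ≤ Fintype.card F := Fintype.one_lt_card
  obtain ⟨m, hm⟩ := Nat.exists_eq_add_of_le' (Fintype.one_lt_card (α := ι))
  by_cases hμ : ∃ μ : F, Module.End.HasEigenvalue (Matrix.toLin' (y : Matrix ι ι F)) μ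
  · obtain ⟨μ, hμ⟩ := hμ
    have hlarge : Fintype.card F ^ (Fintype.card ι - 1) ≤ orderOf x₁ := by
      rw [hord₁, hm]
      exact pow_le_pow_succ_sub_one_div hq₂ _
    exact Or.inl (invGen_of_irreducible_charpoly hirr (by omega)
      ((hy μ).antisymm (Submodule.one_le_finrank_iff.mpr hμ)) htr hq)
  · have hq₃ : 3 < Fintype.card F := by
      refine lt_of_le_of_lt ?_ hq
      calc 3 ≤ 16 * Fintype.card ι ^ 3 := by
            have : 0 < Fintype.card ι ^ 3 := pow_pos Fintype.card_pos 3
            omega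
        _ ≤ _ := Nat.le_self_pow (pow_ne_zero 2 Fintype.card_ne_zero) _
        _ ≤ _ := Nat.self_le_factorial _
    obtain ⟨f, a, hf, hfa, ha⟩ := hx₂ hq₃
    have hlarge : 2 ≤ Fintype.card F ^ (Fintype.card ι - 1) :=
      hq₂.trans (Nat.le_self_pow (by omega) _)
    exact Or.inr (invGen_of_forall_not_hasEigenvalue hf hfa ha (by omega)
      (not_exists.mp hμ) htr hq)

end ProportionOfGenerators

theorem stmt_5 :
    ∀ n : ℕ, 2 ≤ n →
      ∃ C : ℝ, 0 < C ∧
        ∀ (F : Type) [Field F] [Fintype F],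
          ∃ x₁ x₂ : Matrix.SpecialLinearGroup (Fin n) F,
            orderOf x₁ = (Fintype.card F ^ n - 1) / (Fintype.card F - 1) ∧
            orderOf x₂ = Fintype.card F ^ (n - 1) - 1 ∧
            (Nat.card {y : Matrix.SpecialLinearGroup (Fin n) F //
                InvGen x₁ y ∨ InvGen x₂ y} : ℝ) ≥
              (1 - C / Fintype.card F) *
                Nat.card (Matrix.SpecialLinearGroup (Fin n) F) := by
  intro n hn
  have : Nontrivial (Fin n) := Fin.nontrivial_iff_two_le.mpr hn
  let Q : ℕ := ((16 * n ^ 3) ^ (n ^ 2)).factorial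
  let A : ℕ := n + 1 + 2 ^ (n + 2)
  refine ⟨(Q + A : ℕ), by positivity, fun F _ _ ↦ ?_⟩
  obtain ⟨x₁, x₂, hord₁, hord₂, hgen⟩ := exists_forall_invGen_or_invGen F (Fin n)
  rw [Fintype.card_fin] at hord₁ hord₂ hgen
  refine ⟨x₁, x₂, hord₁, hord₂, one_sub_div_mul_le (mod_cast Fintype.card_pos) ?_⟩
  norm_cast
  rcases le_or_gt (Fintype.card F) Q with hsmall | hlarge
  · exact (Nat.mul_le_mul_right _ (hsmall.trans (Nat.le_add_right Q A))).trans
      (Nat.le_add_left _ _)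
  · have hcount :=
      card_mul_natCard_SL_le_ncard_trace_ne_zero_finrank_eigenspace_le_one_add F (Fin n)
    rw [Fintype.card_fin] at hcount
    refine hcount.trans (add_le_add (Nat.mul_le_mul_left _ (Set.ncard_le_ncard fun y hy ↦ ?_))
      (Nat.mul_le_mul_right _ (Nat.le_add_left A Q)))
    exact hgen hlarge y hy.1 hy.2
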